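/- The parallel translation operator T = C − O : H → H is a compact self-adjoint operator with trivial kernel, whose eigenvalues are exactly λ_n = (−1)^{n−1}/(n(n+1)) for n = 1, 2, 3, …, the eigenspace of T for λ_n having dimension 2(2n+1). The orthographic operator O : H → H is a compact self-adjoint operator whose set of nonzero eigenvalues is exactly { −λ_n = (−1)^n/(n(n+1)) : n = 1, 2, 3, … }, the eigenspace of O for −λ_n having dimension 2n+1. -/

import Mathlib

noncomputable section

open MeasureTheory Submodule
open scoped RealInnerProductSpace

abbrev V : Type := EuclideanSpace ℝ (Fin 3)

abbrev S2 : Type := Metric.sphere (0 : V) 1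

/-- The plane `x^⊥` orthogonal to a point `x` of the unit sphere. -/
def plane (x : S2) : Submodule ℝ V := (ℝ ∙ (x : V))ᗮ

/-- The common line `x^⊥ ∩ y^⊥`. -/
def cline (x y : S2) : Submodule ℝ V := plane x ⊓ plane y

/-- The common-lines kernel `C(x,y) : V → V`: orthogonal projection onto the line
`x^⊥ ∩ y^⊥`.  Its restriction to `y^⊥` is the kernel of the paper: it sends `v ∈ y^⊥` to
the orthogonal projection of `v` onto `x^⊥ ∩ y^⊥`, viewed inside `x^⊥`. -/
def Cker (x y : S2) : V →ₗ[ℝ] V :=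
  (cline x y).subtype ∘ₗ (orthogonalProjection (cline x y)).toLinearMap

/-- The map on the sphere induced by a linear isometry of `V`. -/
def sphereMap (g : V ≃ₗᵢ[ℝ] V) (x : S2) : S2 :=
  ⟨g x, by
    have := mem_sphere_zero_iff_norm.mp x.2
    simp [mem_sphere_zero_iff_norm, this]⟩

/-- The antipodal map on the sphere. -/
def negS (x : S2) : S2 :=
  ⟨-(x : V), by
    have := mem_sphere_zero_iff_norm.mp x.2
    simp [mem_sphere_zero_iff_norm, this]⟩

/-- The orthogonal projection `Pr_{x^⊥} : V → x^⊥`, viewed with values in `V`. -/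
def projPerp (x : S2) (v : V) : V := (orthogonalProjection (plane x) v : V)

/-- The unit vector `o_{x,y} = Pr_{x^⊥}(y)/‖Pr_{x^⊥}(y)‖ ∈ x^⊥`. -/
def oVec (x y : S2) : V := ‖projPerp x (y : V)‖⁻¹ • projPerp x (y : V)

/-- The orthographic kernel `O(x,y) : V → V`, `v ↦ B(o_{y,x}, v)·o_{x,y}`.  Its restriction
to `y^⊥` is the kernel of the paper, with values in `x^⊥`. -/
def Oker (x y : S2) : V →ₗ[ℝ] V where
  toFun v := ⟪oVec y x, v⟫ • oVec x y
  map_add' a b := by simp only [inner_add_right, add_smul]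
  map_smul' c a := by simp only [inner_smul_right, RingHom.id_apply, smul_smul]

/-- The Hilbert space `H` of square integrable sections of the bundle of planes, realized as
the subspace of `L²` maps `s : S² → V` with `s x ∈ x^⊥` almost everywhere; it carries the
inner product `(s₁, s₂) = ∫ ⟪s₁ x, s₂ x⟫ dx` inherited from `L²`. -/
def Hsub (μ : Measure S2) : Submodule ℝ (Lp V 2 μ) where
  carrier := {f | ∀ᵐ x ∂μ, f x ∈ plane x}
  add_mem' := by
    intro f g hf hg
    filter_upwards [hf, hg, Lp.coeFn_add f g] with x h1 h2 h3
    simp only [Pi.add_apply] at h3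
    rw [h3]; exact add_mem h1 h2
  zero_mem' := by
    filter_upwards [Lp.coeFn_zero V 2 μ] with x h
    simp only [Pi.zero_apply] at h
    rw [h]; exact zero_mem _
  smul_mem' := by
    intro c f hf
    filter_upwards [hf, Lp.coeFn_smul c f] with x h1 h2
    simp only [Pi.smul_apply] at h2
    rw [h2]; exact smul_mem _ _ h1

/-- The parallel translation kernel `T(x,y) = C(x,y) - O(x,y)`. -/
def Tker (x y : S2) : V →ₗ[ℝ] V := Cker x y - Oker x y

/-
Off the diagonal and the antidiagonal, the kernel of `T` is the parallel transport
`v ↦ v - ⟨x, v⟩ / (1 + ⟨x, y⟩) • (x + y)` along the great circle through `x` and `y`. It commutes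
with the quarter turn `v ↦ y × v`, and its singular weight comes from the gradient of the Green's
function `log (1 - s)`, `s = (1 - ⟨x, y⟩) / 2`, of the spherical Laplacian `Δ` with pole at `-x`.
Integrating by parts against infinitesimal rotations therefore gives
`T (curl (Δ p)) x = curl p (-x)`. For a solid harmonic `p` of degree `n` we have
`Δ p = -n (n + 1) p`, and `curl p` has parity `(-1) ^ n`, so `curl p` and its quarter turn are
eigenfields of `T` with eigenvalue `(-1) ^ (n - 1) / (n (n + 1))`. The kernel of `O` is half the
difference of the transports to `-x` and to `x`, so the same fields diagonalize `O`: for each `n`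
it kills one of the two families and acts as `-T` on the other. By Stone-Weierstrass these fields
span a dense subspace of `H`, and an operator diagonalized by finite-dimensional subspaces with
eigenvalues tending to `0` is compact.
-/

section DiagonalOperators

variable {𝕜 E ι : Type*} [RCLike 𝕜] [NormedAddCommGroup E] [InnerProductSpace 𝕜 E]

/-- The continuous linear map `A` is diagonalized by the family of subspaces `U` with
eigenvalues `α`: the `U i` are pairwise orthogonal, span a dense subspace, and `A` acts on `U i`
as the scalar `α i`.  The `α i` need not be distinct and the `U i` may be zero. -/
structure DiagonalizedBy (A : E →L[𝕜] E) (U : ι → Submodule 𝕜 E) (α : ι → 𝕜) : Prop where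
  orthogonalFamily : OrthogonalFamily 𝕜 (fun i => U i) fun i => (U i).subtypeₗᵢ
  dense : Dense ((⨆ i, U i : Submodule 𝕜 E) : Set E)
  apply_of_mem : ∀ i, ∀ u ∈ U i, A u = α i • u

lemma continuousLinearMap_ext_of_dense_iSup {F : Type*} [AddCommGroup F] [Module 𝕜 F]
    [TopologicalSpace F] [T2Space F] {U : ι → Submodule 𝕜 E}
    (hU : Dense ((⨆ i, U i : Submodule 𝕜 E) : Set E)) {f g : E →L[𝕜] F}
    (h : ∀ i, ∀ u ∈ U i, f u = g u) : f = g := by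
  have hle : ⨆ i, U i ≤ LinearMap.eqLocus (f : E →ₗ[𝕜] F) g := iSup_le h
  exact DFunLike.coe_injective (Continuous.ext_on hU f.continuous g.continuous fun _ hu => hle hu)

lemma finrank_finset_sup_of_iSupIndep {K M : Type*} [DivisionRing K] [AddCommGroup M] [Module K M]
    {U : ι → Submodule K M} [∀ i, FiniteDimensional K (U i)] (hU : iSupIndep U) (s : Finset ι) :
    Module.finrank K ↥(s.sup U) = ∑ i ∈ s, Module.finrank K (U i) := by
  classical
  induction s using Finset.induction_on with
  | empty => rw [Finset.sup_empty, finrank_bot, Finset.sum_empty]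
  | insert a s ha ih =>
    have hdisj : U a ⊓ s.sup U = ⊥ := by
      rw [Finset.sup_eq_iSup]
      exact (hU.disjoint_biSup (y := s) ha).eq_bot
    have := finrank_sup_add_finrank_inf_eq (U a) (s.sup U)
    rw [hdisj, finrank_bot, add_zero, ih] at this
    rw [Finset.sup_insert, this, Finset.sum_insert ha]

namespace DiagonalizedBy

variable {A : E →L[𝕜] E} {U : ι → Submodule 𝕜 E} {α : ι → 𝕜}

lemma inner_eq_zero (h : DiagonalizedBy A U α) {i j : ι} (hij : i ≠ j) {u v : E} (hu : u ∈ U i)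
    (hv : v ∈ U j) : inner 𝕜 u v = 0 :=
  h.orthogonalFamily hij ⟨u, hu⟩ ⟨v, hv⟩

lemma inner_apply (h : DiagonalizedBy A U α) {i : ι} {u : E} (hu : u ∈ U i) (v : E) :
    inner 𝕜 u (A v) = α i * inner 𝕜 u v := by
  suffices (innerSL 𝕜 u).comp A = α i • innerSL 𝕜 u by simpa using congr($this v)
  refine continuousLinearMap_ext_of_dense_iSup h.dense fun j w hw => ?_
  by_cases hij : i = j
  · subst hij
    simp [h.apply_of_mem i w hw]
  · simp [h.apply_of_mem j w hw, h.inner_eq_zero hij hu hw]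

lemma eq_zero_of_forall_inner (h : DiagonalizedBy A U α) {v : E}
    (hv : ∀ i, ∀ u ∈ U i, inner 𝕜 v u = 0) : v = 0 := by
  have : innerSL 𝕜 v = 0 := continuousLinearMap_ext_of_dense_iSup h.dense (by simpa using hv)
  simpa using congr($this v)

lemma isSymmetric (h : DiagonalizedBy A U α) (hα : ∀ i, starRingEnd 𝕜 (α i) = α i) :
    (A : E →ₗ[𝕜] E).IsSymmetric := by
  intro f g
  suffices (innerSL 𝕜 g).comp A = innerSL 𝕜 (A g) by
    simpa using congr(starRingEnd 𝕜 ($this f))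
  refine continuousLinearMap_ext_of_dense_iSup h.dense fun i u hu => ?_
  rw [ContinuousLinearMap.comp_apply, innerSL_apply_apply, innerSL_apply_apply,
    h.apply_of_mem i u hu, inner_smul_right, ← inner_conj_symm (A g), h.inner_apply hu, map_mul,
    hα, inner_conj_symm]

lemma inner_eq_zero_of_mem_eigenspace (h : DiagonalizedBy A U α) {ν : 𝕜} {v : E}
    (hv : v ∈ Module.End.eigenspace (A : E →ₗ[𝕜] E) ν) {i : ι} (hi : α i ≠ ν) {u : E}
    (hu : u ∈ U i) : inner 𝕜 u v = 0 := by
  have hAv : A v = ν • v := Module.End.mem_eigenspace_iff.mp hv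
  have := h.inner_apply hu v
  rw [hAv, inner_smul_right] at this
  exact ((mul_eq_mul_right_iff.mp this).resolve_left hi.symm)

lemma hasEigenvalue_iff (h : DiagonalizedBy A U α) {ν : 𝕜} :
    Module.End.HasEigenvalue (A : E →ₗ[𝕜] E) ν ↔ ∃ i, α i = ν ∧ U i ≠ ⊥ := by
  constructor
  · intro hν
    obtain ⟨v, hv, hv0⟩ := hν.exists_hasEigenvector
    contrapose! hv0
    refine h.eq_zero_of_forall_inner fun i u hu => ?_
    by_cases hi : α i = ν
    · have hu0 : u = 0 := by simpa [hv0 i hi] using hu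
      rw [hu0, inner_zero_right]
    · exact inner_eq_zero_symm.mp (h.inner_eq_zero_of_mem_eigenspace hv hi hu)
  · rintro ⟨i, rfl, hi⟩
    obtain ⟨u, hu, hu0⟩ := exists_mem_ne_zero_of_ne_bot hi
    exact Module.End.hasEigenvalue_of_hasEigenvector
      ⟨Module.End.mem_eigenspace_iff.mpr (h.apply_of_mem i u hu), hu0⟩

lemma eigenspace_eq_finset_sup [∀ i, FiniteDimensional 𝕜 (U i)] (h : DiagonalizedBy A U α) {ν : 𝕜}
    {s : Finset ι} (hs : ∀ i, i ∈ s ↔ α i = ν) :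
    Module.End.eigenspace (A : E →ₗ[𝕜] E) ν = s.sup U := by
  apply le_antisymm
  · intro v hv
    set W : Submodule 𝕜 E := s.sup U
    suffices v - W.starProjection v = 0 from
      starProjection_eq_self_iff.mp (sub_eq_zero.mp this).symm
    refine h.eq_zero_of_forall_inner fun i u hu => ?_
    by_cases hi : i ∈ s
    · exact W.starProjection_inner_eq_zero v u (Finset.le_sup (f := U) hi hu)
    · have hWu : W ≤ (𝕜 ∙ u)ᗮ := Finset.sup_le fun j hj w hw =>
        mem_orthogonal_singleton_iff_inner_right.mpr
          (h.inner_eq_zero (ne_of_mem_of_not_mem hj hi).symm hu hw)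
      rw [inner_eq_zero_symm, inner_sub_right,
        h.inner_eq_zero_of_mem_eigenspace hv (mt (hs i).mpr hi) hu,
        mem_orthogonal_singleton_iff_inner_right.mp (hWu (W.starProjection_apply_mem v)), sub_zero]
  · refine Finset.sup_le fun i hi u hu => Module.End.mem_eigenspace_iff.mpr ?_
    rw [← (hs i).mp hi]
    exact h.apply_of_mem i u hu

lemma finrank_eigenspace [∀ i, FiniteDimensional 𝕜 (U i)] (h : DiagonalizedBy A U α) {ν : 𝕜}
    {s : Finset ι} (hs : ∀ i, i ∈ s ↔ α i = ν) :
    Module.finrank 𝕜 (Module.End.eigenspace (A : E →ₗ[𝕜] E) ν) =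
      ∑ i ∈ s, Module.finrank 𝕜 (U i) := by
  rw [h.eigenspace_eq_finset_sup hs, finrank_finset_sup_of_iSupIndep h.orthogonalFamily.independent]

lemma norm_apply_le_of_mem_iSup (h : DiagonalizedBy A U α) {C : ℝ} (hC : 0 ≤ C)
    (hα : ∀ i, ‖α i‖ ≤ C) {v : E} (hv : v ∈ ⨆ i, U i) : ‖A v‖ ≤ C * ‖v‖ := by
  classical
  obtain ⟨f, hf, rfl⟩ := (mem_iSup_iff_exists_finsupp U v).mp hv
  have hnorm : ‖∑ i ∈ f.support, f i‖ ^ 2 = ∑ i ∈ f.support, ‖f i‖ ^ 2 :=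
    h.orthogonalFamily.norm_sum (fun i => ⟨f i, hf i⟩) f.support
  have hnormA : ‖∑ i ∈ f.support, α i • f i‖ ^ 2 = ∑ i ∈ f.support, ‖α i • f i‖ ^ 2 :=
    h.orthogonalFamily.norm_sum (fun i => α i • ⟨f i, hf i⟩) f.support
  rw [Finsupp.sum, map_sum, Finset.sum_congr rfl fun i _ => h.apply_of_mem i _ (hf i),
    ← sq_le_sq₀ (norm_nonneg _) (by positivity), mul_pow, hnorm, hnormA, Finset.mul_sum]
  gcongr with i
  rw [norm_smul, mul_pow]
  gcongr
  exact hα i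

lemma opNorm_le (h : DiagonalizedBy A U α) {C : ℝ} (hC : 0 ≤ C) (hα : ∀ i, ‖α i‖ ≤ C) :
    ‖A‖ ≤ C := by
  refine A.opNorm_le_bound hC fun v => ?_
  have hclosed : IsClosed {v : E | ‖A v‖ ≤ C * ‖v‖} := isClosed_le (by fun_prop) (by fun_prop)
  exact closure_minimal (fun v hv => h.norm_apply_le_of_mem_iSup hC hα hv) hclosed (h.dense v)

lemma sub_sum_comp_starProjection [DecidableEq ι] [∀ i, (U i).HasOrthogonalProjection]
    (h : DiagonalizedBy A U α) (s : Finset ι) :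
    DiagonalizedBy (A - ∑ i ∈ s, A.comp (U i).starProjection) U
      fun i => if i ∈ s then 0 else α i := by
  refine ⟨h.orthogonalFamily, h.dense, fun i u hu => ?_⟩
  have hproj (j : ι) : A.comp (U j).starProjection u = if j = i then A u else 0 := by
    split_ifs with hj
    · subst hj
      simp [starProjection_eq_self_iff.mpr hu]
    · have : (U j).starProjection u = 0 :=
        (starProjection_apply_eq_zero_iff _).mpr fun w hw => h.inner_eq_zero hj hw hu
      simp [this]
  rw [sub_apply, sum_apply,
    Finset.sum_congr rfl fun j _ => hproj j, Finset.sum_ite_eq']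
  split_ifs <;> simp [h.apply_of_mem i u hu]

lemma isCompactOperator [CompleteSpace E] [∀ i, FiniteDimensional 𝕜 (U i)]
    (h : DiagonalizedBy A U α) (hα : Filter.Tendsto α Filter.cofinite (nhds 0)) :
    IsCompactOperator A := by
  classical
  let P (s : Finset ι) : E →L[𝕜] E := ∑ i ∈ s, A.comp (U i).starProjection
  have hP (s : Finset ι) : IsCompactOperator (P s) := by
    refine sum_mem (S := compactOperator (RingHom.id 𝕜) E E) fun i _ => ?_
    have : ProperSpace (U i) := FiniteDimensional.proper 𝕜 (U i)
    exact ((isCompactOperator_of_locallyCompactSpace_rng (U i).subtypeL).comp_clm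
      (U i).orthogonalProjectionOnto).clm_comp A
  refine isCompactOperator_of_tendsto (F := P) (l := Filter.atTop) ?_ (.of_forall hP)
  refine Metric.tendsto_atTop.mpr fun ε hε => ?_
  have hfin : {i | ¬ ‖α i‖ < ε / 2}.Finite := by
    simpa using (Metric.tendsto_nhds.mp hα) (ε / 2) (by positivity)
  refine ⟨hfin.toFinset, fun s hs => ?_⟩
  rw [dist_comm, dist_eq_norm]
  refine ((h.sub_sum_comp_starProjection s).opNorm_le (half_pos hε).le fun i => ?_).trans_lt
    (half_lt_self hε)
  split_ifs with hi
  · simpa using (half_pos hε).le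
  · by_contra hlarge
    exact hi (hs (hfin.mem_toFinset.mpr fun hlt => hlarge hlt.le))

end DiagonalizedBy

end DiagonalOperators

section HarmonicPolynomials

open MvPolynomial

variable (σ R : Type*) [Fintype σ] [CommRing R]

/-- The algebraic Laplacian `∑ i, ∂ᵢ²` on polynomials in finitely many variables. -/
def polyLaplacian : MvPolynomial σ R →ₗ[R] MvPolynomial σ R :=
  ∑ i, (pderiv i).toLinearMap ∘ₗ (pderiv i).toLinearMap

/-- The polynomial `r² = ∑ i, Xᵢ²`. -/
def radiusSq : MvPolynomial σ R := ∑ i, X i ^ 2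

/-- The space of harmonic homogeneous polynomials of degree `n`. -/
def harmonicSubmodule (n : ℕ) : Submodule R (MvPolynomial σ R) :=
  homogeneousSubmodule σ R n ⊓ LinearMap.ker (polyLaplacian σ R)

variable {σ R}

lemma polyLaplacian_apply (p : MvPolynomial σ R) :
    polyLaplacian σ R p = ∑ i, pderiv i (pderiv i p) := by
  simp [polyLaplacian]

lemma mem_harmonicSubmodule {n : ℕ} {p : MvPolynomial σ R} :
    p ∈ harmonicSubmodule σ R n ↔ p.IsHomogeneous n ∧ polyLaplacian σ R p = 0 :=
  Iff.rfl

lemma isHomogeneous_radiusSq : (radiusSq σ R).IsHomogeneous 2 :=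
  IsHomogeneous.sum _ _ _ fun i _ => isHomogeneous_X_pow i 2

lemma radiusSq_ne_zero [Nonempty σ] [Nontrivial R] : radiusSq σ R ≠ 0 := by
  classical
  obtain ⟨i⟩ := ‹Nonempty σ›
  intro h
  have := congrArg (eval (Pi.single i (1 : R))) h
  simp [radiusSq, Pi.single_apply] at this

lemma pderiv_radiusSq (i : σ) : pderiv i (radiusSq σ R) = 2 * X i := by
  classical
  simp [radiusSq, Derivation.leibniz_pow, pderiv_X, Pi.single_apply]

lemma isHomogeneous_polyLaplacian {n : ℕ} {p : MvPolynomial σ R} (hp : p.IsHomogeneous n) :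
    (polyLaplacian σ R p).IsHomogeneous (n - 2) := by
  rw [polyLaplacian_apply]
  exact IsHomogeneous.sum _ _ _ fun i _ => hp.pderiv.pderiv

lemma polyLaplacian_eq_zero_of_isHomogeneous {n : ℕ} (hn : n < 2) {p : MvPolynomial σ R}
    (hp : p.IsHomogeneous n) : polyLaplacian σ R p = 0 := by
  rw [polyLaplacian_apply]
  refine Finset.sum_eq_zero fun i _ => ?_
  have hconst : (pderiv i p).IsHomogeneous 0 := by
    convert hp.pderiv (i := i) using 1
    lia
  rw [totalDegree_eq_zero_iff_eq_C.mp ((totalDegree_zero_iff_isHomogeneous σ).mpr hconst), pderiv_C]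

lemma polyLaplacian_radiusSq_mul {n : ℕ} {p : MvPolynomial σ R} (hp : p.IsHomogeneous n) :
    polyLaplacian σ R (radiusSq σ R * p) =
      radiusSq σ R * polyLaplacian σ R p + (4 * n + 2 * Fintype.card σ) * p := by
  have hterm (i : σ) : pderiv i (pderiv i (radiusSq σ R * p)) =
      radiusSq σ R * pderiv i (pderiv i p) + 4 * (X i * pderiv i p) + 2 * p := by
    have h2 : pderiv i (2 * X i : MvPolynomial σ R) = 2 := by
      rw [← map_ofNat (C (σ := σ) (R := R)) 2, pderiv_C_mul, pderiv_X_self, mul_one]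
    simp only [Derivation.leibniz, pderiv_radiusSq, map_add, smul_eq_mul, h2]
    ring
  simp_rw [polyLaplacian_apply, hterm, Finset.sum_add_distrib, ← Finset.mul_sum,
    hp.sum_X_mul_pderiv, Finset.sum_const, Finset.card_univ, nsmul_eq_mul]
  ring

lemma polyLaplacian_radiusSq_pow_mul {n : ℕ} {p : MvPolynomial σ R} (hp : p.IsHomogeneous n)
    (k : ℕ) :
    polyLaplacian σ R (radiusSq σ R ^ (k + 1) * p) =
      radiusSq σ R ^ k * (radiusSq σ R * polyLaplacian σ R p +
        (2 * (k + 1) * (2 * n + 2 * k + Fintype.card σ) : ℕ) • p) := by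
  induction k with
  | zero =>
    rw [zero_add, pow_one, polyLaplacian_radiusSq_mul hp, nsmul_eq_mul]
    push_cast
    ring
  | succ k ih =>
    have hhom := (isHomogeneous_radiusSq (σ := σ) (R := R)).pow (k + 1) |>.mul hp
    rw [pow_succ', mul_assoc, polyLaplacian_radiusSq_mul hhom, ih, nsmul_eq_mul, nsmul_eq_mul]
    push_cast
    ring

variable {K : Type*} [Field K]

instance instFiniteDimensionalHomogeneousSubmodule {τ : Type*} [Finite τ] (n : ℕ) :
    FiniteDimensional K (homogeneousSubmodule τ K n) :=
  Module.Finite.iff_fg.mpr (homogeneousSubmodule_fg τ K n)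

instance instFiniteDimensionalHarmonicSubmodule (n : ℕ) :
    FiniteDimensional K (harmonicSubmodule σ K n) :=
  Submodule.finiteDimensional_of_le (S₂ := homogeneousSubmodule σ K n) inf_le_left

lemma finrank_homogeneousSubmodule (n : ℕ) :
    Module.finrank K (homogeneousSubmodule σ K n) = (Fintype.card σ).multichoose n := by
  classical
  have hset : {d : σ →₀ ℕ | d.degree = n} = (Finset.univ.finsuppAntidiag n : Finset (σ →₀ ℕ)) := by
    ext d
    simp [Finsupp.degree_eq_sum]
  rw [homogeneousSubmodule_eq_finsupp_supported, hset,
    (AddMonoidAlgebra.supportedEquivFinsupp _).finrank_eq, Module.finrank_finsupp_self]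
  simp [Finset.card_finsuppAntidiag_nat_eq_multichoose]

variable [CharZero K]

lemma eq_zero_of_polyLaplacian_radiusSq_pow_mul_eq_zero [Nonempty σ] {n : ℕ} (k : ℕ)
    {p : MvPolynomial σ K} (hp : p.IsHomogeneous n)
    (h : polyLaplacian σ K (radiusSq σ K ^ (k + 1) * p) = 0) : p = 0 := by
  induction n using Nat.strong_induction_on generalizing k p with | h n ih => ?_
  set c : ℕ := 2 * (k + 1) * (2 * n + 2 * k + Fintype.card σ)
  have hc : c ≠ 0 := by simp [c]
  have hcp : radiusSq σ K * polyLaplacian σ K p + c • p = 0 := by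
    rw [polyLaplacian_radiusSq_pow_mul hp] at h
    exact (mul_eq_zero.mp h).resolve_left (pow_ne_zero k radiusSq_ne_zero)
  suffices polyLaplacian σ K p = 0 by
    rw [this, mul_zero, zero_add] at hcp
    exact (smul_eq_zero.mp hcp).resolve_left hc
  rcases lt_or_ge n 2 with hn | hn
  · exact polyLaplacian_eq_zero_of_isHomogeneous hn hp
  · refine ih (n - 2) (by lia) (k + 1) (isHomogeneous_polyLaplacian hp) ?_
    have hr : radiusSq σ K ^ (k + 1 + 1) * polyLaplacian σ K p =
        -(c • (radiusSq σ K ^ (k + 1) * p)) := by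
      rw [eq_neg_iff_add_eq_zero, pow_succ, mul_assoc, ← mul_smul_comm, ← mul_add, hcp, mul_zero]
    rw [hr, map_neg, map_nsmul, h, smul_zero, neg_zero]

lemma exists_polyLaplacian_radiusSq_mul_eq [Nonempty σ] {n : ℕ} {p : MvPolynomial σ K}
    (hp : p.IsHomogeneous n) :
    ∃ q : MvPolynomial σ K, q.IsHomogeneous n ∧ polyLaplacian σ K (radiusSq σ K * q) = p := by
  have hmem (q : homogeneousSubmodule σ K n) :
      polyLaplacian σ K (radiusSq σ K * q) ∈ homogeneousSubmodule σ K n := by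
    have := isHomogeneous_polyLaplacian (isHomogeneous_radiusSq.mul q.2)
    rwa [Nat.add_sub_cancel_left] at this
  let Φ : homogeneousSubmodule σ K n →ₗ[K] homogeneousSubmodule σ K n :=
    (polyLaplacian σ K ∘ₗ LinearMap.mulLeft K (radiusSq σ K) ∘ₗ
      (homogeneousSubmodule σ K n).subtype).codRestrict _ hmem
  have hinj : Function.Injective Φ := by
    refine (injective_iff_map_eq_zero Φ).mpr fun q hq => Subtype.ext ?_
    refine eq_zero_of_polyLaplacian_radiusSq_pow_mul_eq_zero 0 q.2 ?_
    rw [zero_add, pow_one]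
    exact congrArg Subtype.val hq
  obtain ⟨q, hq⟩ := LinearMap.injective_iff_surjective.mp hinj ⟨p, hp⟩
  exact ⟨q, q.2, congrArg Subtype.val hq⟩

lemma exists_harmonic_add_radiusSq_mul [Nonempty σ] {n : ℕ} {p : MvPolynomial σ K}
    (hp : p.IsHomogeneous (n + 2)) :
    ∃ h ∈ harmonicSubmodule σ K (n + 2), ∃ q : MvPolynomial σ K,
      q.IsHomogeneous n ∧ p = h + radiusSq σ K * q := by
  obtain ⟨q, hq, hΔ⟩ := exists_polyLaplacian_radiusSq_mul_eq (isHomogeneous_polyLaplacian hp)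
  rw [Nat.add_sub_cancel] at hq
  refine ⟨p - radiusSq σ K * q, ⟨?_, ?_⟩, q, hq, by ring⟩
  · exact sub_mem hp (add_comm n 2 ▸ isHomogeneous_radiusSq.mul hq)
  · exact LinearMap.mem_ker.mpr (by rw [map_sub, hΔ, sub_self])

lemma harmonicSubmodule_of_lt_two {n : ℕ} (hn : n < 2) :
    harmonicSubmodule σ R n = homogeneousSubmodule σ R n :=
  inf_eq_left.mpr fun _ hp => polyLaplacian_eq_zero_of_isHomogeneous hn hp

lemma finrank_harmonicSubmodule_add [Nonempty σ] (n : ℕ) :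
    Module.finrank K (harmonicSubmodule σ K (n + 2)) +
      Module.finrank K (homogeneousSubmodule σ K n) =
        Module.finrank K (homogeneousSubmodule σ K (n + 2)) := by
  let Δ : homogeneousSubmodule σ K (n + 2) →ₗ[K] homogeneousSubmodule σ K n :=
    ((polyLaplacian σ K).domRestrict _).codRestrict _ fun p => isHomogeneous_polyLaplacian p.2
  have hsurj : LinearMap.range Δ = ⊤ := by
    refine LinearMap.range_eq_top.mpr fun p => ?_
    obtain ⟨q, hq, hΔ⟩ := exists_polyLaplacian_radiusSq_mul_eq p.2
    exact ⟨⟨radiusSq σ K * q, add_comm n 2 ▸ isHomogeneous_radiusSq.mul hq⟩, Subtype.ext hΔ⟩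
  have hker : (LinearMap.ker Δ).map (homogeneousSubmodule σ K (n + 2)).subtype =
      harmonicSubmodule σ K (n + 2) := by
    have hΔ : LinearMap.ker Δ = (LinearMap.ker (polyLaplacian σ K)).comap (Submodule.subtype _) :=
      (LinearMap.ker_codRestrict _ _ _).trans (LinearMap.ker_domRestrict _ _)
    rw [hΔ, map_comap_subtype, harmonicSubmodule]
  rw [← LinearMap.finrank_range_add_finrank_ker Δ, hsurj, finrank_top, ← hker,
    finrank_map_subtype_eq, add_comm]

lemma finrank_harmonicSubmodule_fin_three (n : ℕ) :
    Module.finrank K (harmonicSubmodule (Fin 3) K n) = 2 * n + 1 := by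
  rcases lt_or_ge n 2 with hn | hn
  · rw [harmonicSubmodule_of_lt_two hn, finrank_homogeneousSubmodule]
    interval_cases n <;> simp
  · obtain ⟨m, rfl⟩ := Nat.exists_eq_add_of_le' hn
    have hcard (k : ℕ) : (Nat.multichoose 3 k : ℚ) = (k + 2) * (k + 1) / 2 := by
      rw [Nat.multichoose_eq, show 3 + k - 1 = k + 2 by lia, Nat.choose_symm_add,
        Nat.cast_choose_two]
      push_cast
      ring
    have := finrank_harmonicSubmodule_add (σ := Fin 3) (K := K) m
    rw [finrank_homogeneousSubmodule, finrank_homogeneousSubmodule, Fintype.card_fin] at this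
    have := congrArg (Nat.cast (R := ℚ)) this
    push_cast [hcard] at this
    have : (Module.finrank K (harmonicSubmodule (Fin 3) K (m + 2)) : ℚ) = 2 * (m + 2) + 1 := by
      linear_combination this
    exact_mod_cast this

end HarmonicPolynomials

section AngularDerivatives

open MvPolynomial

variable {R : Type*} [CommRing R]

/-- The infinitesimal rotation about the `i`-th coordinate axis, acting on polynomials in three
variables as the `i`-th component of `x × ∇`; indices are read modulo three. -/
def angularDeriv (i : Fin 3) : Derivation R (MvPolynomial (Fin 3) R) (MvPolynomial (Fin 3) R) :=
  (X (i + 1) : MvPolynomial (Fin 3) R) • pderiv (i + 2) -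
    (X (i + 2) : MvPolynomial (Fin 3) R) • pderiv (i + 1)

/-- The infinitesimal rotation about the axis `b`. -/
def axialDeriv (b : Fin 3 → R) :
    Derivation R (MvPolynomial (Fin 3) R) (MvPolynomial (Fin 3) R) :=
  ∑ i, b i • angularDeriv i

/-- The linear form `⟨b, ·⟩` as a polynomial. -/
def linearForm (b : Fin 3 → R) : MvPolynomial (Fin 3) R := ∑ i, C (b i) * X i

/-- The Casimir element of the infinitesimal rotations; on functions on the unit sphere it is the
Laplace–Beltrami operator. -/
def sphericalLaplacian : MvPolynomial (Fin 3) R →ₗ[R] MvPolynomial (Fin 3) R :=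
  ∑ i, (angularDeriv i).toLinearMap ∘ₗ (angularDeriv i).toLinearMap

lemma angularDeriv_apply (i : Fin 3) (p : MvPolynomial (Fin 3) R) :
    angularDeriv i p = X (i + 1) * pderiv (i + 2) p - X (i + 2) * pderiv (i + 1) p := by
  simp [angularDeriv]

lemma axialDeriv_apply (b : Fin 3 → R) (p : MvPolynomial (Fin 3) R) :
    axialDeriv b p = ∑ i, C (b i) * angularDeriv i p := by
  simp only [axialDeriv, Fin.sum_univ_three, Derivation.add_apply, Derivation.smul_apply,
    smul_eq_C_mul]

lemma sphericalLaplacian_apply (p : MvPolynomial (Fin 3) R) :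
    sphericalLaplacian p = ∑ i, angularDeriv i (angularDeriv i p) := by
  simp [sphericalLaplacian]

lemma pderiv_comm {σ : Type*} (i j : σ) (p : MvPolynomial σ R) :
    pderiv i (pderiv j p) = pderiv j (pderiv i p) := by
  classical
  have h : ⁅pderiv (R := R) i, pderiv (R := R) j⁆ = 0 := by
    refine derivation_ext fun k => ?_
    rw [Derivation.commutator_apply]
    simp [pderiv_X, Pi.single_apply, apply_ite]
  simpa [Derivation.commutator_apply, sub_eq_zero] using DFunLike.congr_fun h p

lemma angularDeriv_commutator (i : Fin 3) (p : MvPolynomial (Fin 3) R) :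
    angularDeriv i (angularDeriv (i + 1) p) - angularDeriv (i + 1) (angularDeriv i p) =
      -angularDeriv (i + 2) p := by
  fin_cases i <;>
    simp only [Fin.zero_eta, Fin.mk_one, Fin.reduceFinMk, Fin.isValue, Fin.reduceAdd, zero_add,
      angularDeriv_apply, map_sub, Derivation.leibniz, smul_eq_mul, pderiv_X, Pi.single_eq_same,
      ne_eq, Fin.reduceEq, zero_ne_one, one_ne_zero, not_false_eq_true, Pi.single_eq_of_ne,
      pderiv_comm (1 : Fin 3) 0, pderiv_comm (2 : Fin 3) 0, pderiv_comm (2 : Fin 3) 1] <;>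
    ring

lemma sphericalLaplacian_angularDeriv (i : Fin 3) (p : MvPolynomial (Fin 3) R) :
    sphericalLaplacian (angularDeriv i p) = angularDeriv i (sphericalLaplacian p) := by
  have hsum (q : MvPolynomial (Fin 3) R) :
      sphericalLaplacian q = angularDeriv i (angularDeriv i q) +
        angularDeriv (i + 1) (angularDeriv (i + 1) q) +
        angularDeriv (i + 2) (angularDeriv (i + 2) q) := by
    rw [sphericalLaplacian_apply, Fin.sum_univ_three]
    fin_cases i
    · rfl
    · exact add_rotate _ _ _
    · exact (add_rotate _ _ _).symm
  have hnext := angularDeriv_commutator (R := R) i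
  have hprev (q : MvPolynomial (Fin 3) R) :
      angularDeriv (i + 2) (angularDeriv i q) - angularDeriv i (angularDeriv (i + 2) q) =
        -angularDeriv (i + 1) q := by
    simpa [add_assoc] using angularDeriv_commutator (i + 2) q
  have hnext_deriv := congrArg (angularDeriv (i + 1)) (hnext p)
  have hprev_deriv := congrArg (angularDeriv (i + 2)) (hprev p)
  rw [map_sub, map_neg] at hnext_deriv hprev_deriv
  rw [hsum, hsum, map_add, map_add]
  linear_combination hprev (angularDeriv (i + 2) p) + hprev_deriv -
    hnext (angularDeriv (i + 1) p) - hnext_deriv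

lemma sphericalLaplacian_eq_of_isHomogeneous {n : ℕ} {p : MvPolynomial (Fin 3) R}
    (hp : p.IsHomogeneous n) :
    sphericalLaplacian p =
      radiusSq (Fin 3) R * polyLaplacian (Fin 3) R p -
        (n * (n + 1) : MvPolynomial (Fin 3) R) * p := by
  have euler : X 0 * pderiv 0 p + X 1 * pderiv 1 p + X 2 * pderiv 2 p =
      (n : MvPolynomial (Fin 3) R) * p := by
    simpa [Fin.sum_univ_three] using hp.sum_X_mul_pderiv
  have e0 := congrArg (pderiv 0) euler
  have e1 := congrArg (pderiv 1) euler
  have e2 := congrArg (pderiv 2) euler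
  simp only [Fin.isValue, map_add, Derivation.leibniz, smul_eq_mul, pderiv_X, Pi.single_eq_same,
    ne_eq, Fin.reduceEq, zero_ne_one, one_ne_zero, not_false_eq_true, Pi.single_eq_of_ne,
    Derivation.map_natCast, pderiv_comm (1 : Fin 3) 0, pderiv_comm (2 : Fin 3) 0,
    pderiv_comm (2 : Fin 3) 1] at e0 e1 e2
  simp only [sphericalLaplacian_apply, polyLaplacian_apply, radiusSq, angularDeriv_apply,
    Fin.isValue, Fin.reduceAdd, zero_add, Fin.sum_univ_three, map_sub, Derivation.leibniz,
    smul_eq_mul, pderiv_X, Pi.single_eq_same, ne_eq, Fin.reduceEq, zero_ne_one, one_ne_zero,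
    not_false_eq_true, Pi.single_eq_of_ne, pderiv_comm (1 : Fin 3) 0, pderiv_comm (2 : Fin 3) 0,
    pderiv_comm (2 : Fin 3) 1]
  linear_combination -X 0 * e0 - X 1 * e1 - X 2 * e2 - (n + 1) * euler

lemma sum_X_mul_angularDeriv (p : MvPolynomial (Fin 3) R) : ∑ i, X i * angularDeriv i p = 0 := by
  simp only [angularDeriv_apply, Fin.isValue, Fin.sum_univ_three, zero_add, Fin.reduceAdd]
  ring

lemma sum_angularDeriv_pderiv (p : MvPolynomial (Fin 3) R) :
    ∑ i, angularDeriv i (pderiv i p) = 0 := by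
  simp only [angularDeriv_apply, Fin.isValue, Fin.sum_univ_three, zero_add, Fin.reduceAdd,
    pderiv_comm (1 : Fin 3) 0, pderiv_comm (2 : Fin 3) 0, pderiv_comm (2 : Fin 3) 1]
  ring

lemma angularDeriv_radiusSq (i : Fin 3) : angularDeriv i (radiusSq (Fin 3) R) = 0 := by
  rw [angularDeriv_apply, pderiv_radiusSq, pderiv_radiusSq]
  ring

lemma isHomogeneous_angularDeriv {n : ℕ} {p : MvPolynomial (Fin 3) R}
    (hp : p.IsHomogeneous (n + 1)) (i : Fin 3) :
    (angularDeriv i p).IsHomogeneous (n + 1) := by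
  rw [angularDeriv_apply, add_comm n 1]
  exact ((isHomogeneous_X R _).mul hp.pderiv).sub ((isHomogeneous_X R _).mul hp.pderiv)

lemma angularDeriv_X_comm (i j : Fin 3) :
    angularDeriv i (X j : MvPolynomial (Fin 3) R) = -angularDeriv j (X i) := by
  fin_cases i <;> fin_cases j <;> simp [angularDeriv_apply, pderiv_X]

lemma angularDeriv_linearForm (i : Fin 3) (b : Fin 3 → R) :
    angularDeriv i (linearForm b) = -axialDeriv b (X i) := by
  simp [linearForm, axialDeriv_apply, angularDeriv_X_comm i, Derivation.leibniz, ← algebraMap_eq]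

lemma axialDeriv_linearForm_self (b : Fin 3 → R) : axialDeriv b (linearForm b) = 0 := by
  simp only [linearForm, axialDeriv_apply, Fin.sum_univ_three, angularDeriv_apply, map_add,
    Fin.isValue, Fin.reduceAdd, zero_add, Derivation.leibniz, derivation_C, pderiv_X, smul_eq_mul,
    Pi.single_eq_same, ne_eq, Fin.reduceEq, zero_ne_one, one_ne_zero, not_false_eq_true,
    Pi.single_eq_of_ne]
  ring

lemma sphericalLaplacian_linearForm (b : Fin 3 → R) :
    sphericalLaplacian (linearForm b) = -2 * linearForm b := by
  have hhom : (linearForm b).IsHomogeneous 1 :=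
    IsHomogeneous.sum _ _ _ fun i _ => (isHomogeneous_X R i).C_mul (b i)
  rw [sphericalLaplacian_eq_of_isHomogeneous hhom,
    polyLaplacian_eq_zero_of_isHomogeneous one_lt_two hhom]
  push_cast
  ring

lemma sum_angularDeriv_linearForm_sq (b : Fin 3 → R) :
    ∑ i, angularDeriv i (linearForm b) ^ 2 =
      C (b ⬝ᵥ b) * radiusSq (Fin 3) R - linearForm b ^ 2 := by
  simp only [linearForm, radiusSq, dotProduct, Fin.sum_univ_three, angularDeriv_apply, map_add,
    map_mul, Fin.isValue, Fin.reduceAdd, zero_add, Derivation.leibniz, derivation_C, pderiv_X,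
    smul_eq_mul, Pi.single_eq_same, ne_eq, Fin.reduceEq, zero_ne_one, one_ne_zero,
    not_false_eq_true, Pi.single_eq_of_ne]
  ring

lemma sphericalLaplacian_pow (p : MvPolynomial (Fin 3) R) (k : ℕ) :
    sphericalLaplacian (p ^ (k + 1)) =
      (k + 1) * (p ^ k * sphericalLaplacian p + k * p ^ (k - 1) * ∑ i, angularDeriv i p ^ 2) := by
  simp only [sphericalLaplacian_apply, Derivation.leibniz_pow, Nat.add_sub_cancel, nsmul_eq_mul,
    smul_eq_mul, Derivation.leibniz, Derivation.map_natCast, Finset.mul_sum,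
    ← Finset.sum_add_distrib]
  refine Finset.sum_congr rfl fun i _ => ?_
  push_cast
  ring

end AngularDerivatives

section InvariantIntegration

open MvPolynomial

lemma norm_sphere_coe (x : S2) : ‖(x : V)‖ = 1 := mem_sphere_zero_iff_norm.mp x.2

lemma inner_sphere_self (x : S2) : ⟪(x : V), (x : V)⟫ = 1 := by
  rw [real_inner_self_eq_norm_sq, norm_sphere_coe, one_pow]

lemma abs_inner_sphere_le_one (x y : S2) : |⟪(x : V), (y : V)⟫| ≤ 1 := by
  simpa only [norm_sphere_coe, mul_one] using abs_real_inner_le_norm (x : V) y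

lemma hasDerivAt_eval {𝕜 σ : Type*} [NontriviallyNormedField 𝕜] [Fintype σ]
    (p : MvPolynomial σ 𝕜) {c : 𝕜 → σ → 𝕜} {c' : σ → 𝕜} {t : 𝕜} (hc : HasDerivAt c c' t) :
    HasDerivAt (fun s => eval (c s) p) (∑ i, c' i * eval (c t) (pderiv i p)) t := by
  classical
  induction p using MvPolynomial.induction_on with
  | C a => simpa using hasDerivAt_const t a
  | add p q hp hq => simpa [mul_add, Finset.sum_add_distrib] using hp.fun_add hq
  | mul_X p j hp =>
    have h := hp.fun_mul (hasDerivAt_pi.mp hc j)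
    simp only [map_mul, eval_X]
    refine h.congr_deriv ?_
    simp [Derivation.leibniz, pderiv_X, Pi.single_apply, apply_ite (eval (c t)), mul_add,
      Finset.sum_add_distrib, Finset.mul_sum, mul_comm, mul_left_comm, add_comm]

lemma continuous_eval_ofLp (p : MvPolynomial (Fin 3) ℝ) :
    Continuous fun y : V => eval y.ofLp p :=
  (continuous_eval p).comp (PiLp.continuous_ofLp 2 _)

lemma eval_linearForm (b y : V) : eval y.ofLp (linearForm b.ofLp) = ⟪b, y⟫ := by
  simp [linearForm, PiLp.inner_apply, mul_comm]

lemma eval_radiusSq_sphere (y : S2) : eval y.1.ofLp (radiusSq (Fin 3) ℝ) = 1 := by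
  simp [radiusSq, ← EuclideanSpace.real_norm_sq_eq]

/-- The rotation of `V` by the angle `θ` about the `i`-th coordinate axis. -/
def axisRotation (i : Fin 3) (θ : ℝ) : V ≃ₗᵢ[ℝ] V :=
  LinearIsometry.toLinearIsometryEquiv
    { toFun := fun y => WithLp.toLp 2 fun j =>
        if j = i + 1 then Real.cos θ * y (i + 1) - Real.sin θ * y (i + 2)
        else if j = i + 2 then Real.sin θ * y (i + 1) + Real.cos θ * y (i + 2) else y i
      map_add' := fun y z => by
        ext j
        simp only [PiLp.add_apply]
        split_ifs <;> ring
      map_smul' := fun a y => by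
        ext j
        simp only [PiLp.smul_apply, smul_eq_mul, RingHom.id_apply]
        split_ifs <;> ring
      norm_map' := fun y => by
        refine (sq_eq_sq₀ (norm_nonneg _) (norm_nonneg _)).mp ?_
        have := Real.sin_sq_add_cos_sq θ
        simp only [EuclideanSpace.real_norm_sq_eq, Fin.sum_univ_three]
        fin_cases i
        · simp
          linear_combination (y 1 ^ 2 + y 2 ^ 2) * this
        · simp
          linear_combination (y 2 ^ 2 + y 0 ^ 2) * this
        · simp
          linear_combination (y 0 ^ 2 + y 1 ^ 2) * this }
    rfl

lemma axisRotation_apply (i : Fin 3) (θ : ℝ) (y : V) :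
    (axisRotation i θ y).ofLp = fun j =>
      if j = i + 1 then Real.cos θ * y (i + 1) - Real.sin θ * y (i + 2)
      else if j = i + 2 then Real.sin θ * y (i + 1) + Real.cos θ * y (i + 2) else y i := rfl

lemma axisRotation_add_two_pi (i : Fin 3) (θ : ℝ) (y : V) :
    axisRotation i (θ + 2 * Real.pi) y = axisRotation i θ y := by
  ext j
  simp only [axisRotation_apply, Real.cos_add_two_pi, Real.sin_add_two_pi]

lemma hasDerivAt_axisRotation (i : Fin 3) (y : V) (θ : ℝ) :
    HasDerivAt (fun s => (axisRotation i s y).ofLp)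
      (fun j => if j = i + 1 then -axisRotation i θ y (i + 2)
        else if j = i + 2 then axisRotation i θ y (i + 1) else 0) θ := by
  have hcos (a b : ℝ) := ((Real.hasDerivAt_cos θ).mul_const a).fun_sub
    ((Real.hasDerivAt_sin θ).mul_const b)
  have hsin (a b : ℝ) := ((Real.hasDerivAt_sin θ).mul_const a).fun_add
    ((Real.hasDerivAt_cos θ).mul_const b)
  have hne : i + 2 ≠ i + 1 := by simp
  refine hasDerivAt_pi.mpr fun j => ?_
  simp only [axisRotation_apply, if_neg hne, if_true]
  split_ifs
  · exact (hcos _ _).congr_deriv (by ring)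
  · exact (hsin _ _).congr_deriv (by ring)
  · exact hasDerivAt_const θ _

lemma hasDerivAt_eval_axisRotation (i : Fin 3) (p : MvPolynomial (Fin 3) ℝ) (y : V) (θ : ℝ) :
    HasDerivAt (fun s => eval (axisRotation i s y).ofLp p)
      (eval (axisRotation i θ y).ofLp (angularDeriv i p)) θ := by
  refine (hasDerivAt_eval p (hasDerivAt_axisRotation i y θ)).congr_deriv ?_
  fin_cases i <;> simp [angularDeriv_apply, Fin.sum_univ_three] <;> ring

lemma continuous_eval_axisRotation (i : Fin 3) (p : MvPolynomial (Fin 3) ℝ) :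
    Continuous fun q : ℝ × S2 => eval (axisRotation i q.1 q.2).ofLp p := by
  refine (continuous_eval p).comp (continuous_pi fun j => ?_)
  simp only [axisRotation_apply]
  split_ifs <;> fun_prop

lemma integrable_of_continuous {X E : Type*} [TopologicalSpace X] [CompactSpace X]
    [MeasurableSpace X] [OpensMeasurableSpace X] [NormedAddCommGroup E]
    {ν : Measure X} [IsFiniteMeasure ν] {f : X → E} (hf : Continuous f) : Integrable f ν :=
  hf.integrable_of_hasCompactSupport (.of_compactSpace f)

lemma continuous_eval_sphere (p : MvPolynomial (Fin 3) ℝ) :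
    Continuous fun y : S2 => eval y.1.ofLp p :=
  (continuous_eval_ofLp p).comp continuous_subtype_val

/-- Invariance of a measure on the sphere under all linear isometries, the property
characterising the uniform distribution among probability measures. -/
class IsIsometryInvariant (μ : Measure S2) : Prop where
  measurePreserving : ∀ g : V ≃ₗᵢ[ℝ] V, MeasurePreserving (sphereMap g) μ μ

lemma measurableEmbedding_sphereMap (g : V ≃ₗᵢ[ℝ] V) : MeasurableEmbedding (sphereMap g) :=
  (show Continuous (sphereMap g) from
    (g.continuous.comp continuous_subtype_val).subtype_mk _).measurableEmbedding
    fun _ _ h => Subtype.ext (g.injective (congrArg Subtype.val h))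

lemma integral_sphereMap {E : Type*} [NormedAddCommGroup E] [NormedSpace ℝ E] (μ : Measure S2)
    [IsIsometryInvariant μ] (g : V ≃ₗᵢ[ℝ] V) (F : S2 → E) :
    ∫ y, F (sphereMap g y) ∂μ = ∫ y, F y ∂μ :=
  (IsIsometryInvariant.measurePreserving g).integral_comp (measurableEmbedding_sphereMap g) F

/-- The integral of a polynomial function over the sphere. -/
def sphereIntegral (μ : Measure S2) [IsFiniteMeasure μ] : MvPolynomial (Fin 3) ℝ →ₗ[ℝ] ℝ where
  toFun p := ∫ y : S2, eval y.1.ofLp p ∂μ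
  map_add' p q := by
    simp only [map_add]
    exact integral_add (integrable_of_continuous (continuous_eval_sphere p))
      (integrable_of_continuous (continuous_eval_sphere q))
  map_smul' a p := by simp [smul_eval, integral_const_mul]

lemma sphereIntegral_congr (μ : Measure S2) [IsFiniteMeasure μ] {p q : MvPolynomial (Fin 3) ℝ}
    (h : ∀ y : S2, eval y.1.ofLp p = eval y.1.ofLp q) :
    sphereIntegral μ p = sphereIntegral μ q :=
  integral_congr_ae (.of_forall h)

lemma sphereIntegral_angularDeriv (μ : Measure S2) [IsFiniteMeasure μ] [IsIsometryInvariant μ]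
    (i : Fin 3) (p : MvPolynomial (Fin 3) ℝ) : sphereIntegral μ (angularDeriv i p) = 0 := by
  set f : ℝ → S2 → ℝ := fun θ y => eval (axisRotation i θ y).ofLp (angularDeriv i p)
  have hcont : Continuous (Function.uncurry f) := continuous_eval_axisRotation i _
  have hperiod (y : S2) : ∫ θ in 0..2 * Real.pi, f θ y = 0 := by
    rw [intervalIntegral.integral_eq_sub_of_hasDerivAt
      (fun θ _ => hasDerivAt_eval_axisRotation i p y θ)
      ((hcont.comp (Continuous.prodMk_left y)).intervalIntegrable _ _), ← zero_add (2 * Real.pi),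
      axisRotation_add_two_pi, sub_self]
  have hint : Integrable (Function.uncurry f)
      ((volume.restrict (Set.uIoc 0 (2 * Real.pi))).prod μ) := by
    rw [← Measure.restrict_univ (μ := μ), Measure.prod_restrict]
    exact (hcont.continuousOn.integrableOn_compact
      (isCompact_uIcc.prod isCompact_univ)).mono_set
        (Set.prod_mono Set.uIoc_subset_uIcc subset_rfl)
  have hinv (θ : ℝ) : ∫ y, f θ y ∂μ = sphereIntegral μ (angularDeriv i p) :=
    integral_sphereMap μ (axisRotation i θ) fun y => eval y.1.ofLp (angularDeriv i p)
  have hswap := intervalIntegral_integral_swap hint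
  simp only [hinv, hperiod, intervalIntegral.integral_const, integral_zero, sub_zero,
    smul_eq_mul] at hswap
  exact (mul_eq_zero.mp hswap).resolve_left Real.two_pi_pos.ne'

lemma sphereIntegral_mul_angularDeriv (μ : Measure S2) [IsFiniteMeasure μ] [IsIsometryInvariant μ]
    (i : Fin 3) (p q : MvPolynomial (Fin 3) ℝ) :
    sphereIntegral μ (p * angularDeriv i q) = -sphereIntegral μ (angularDeriv i p * q) := by
  have h := sphereIntegral_angularDeriv μ i (p * q)
  rw [Derivation.leibniz, map_add, smul_eq_mul, smul_eq_mul, mul_comm q] at h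
  exact eq_neg_of_add_eq_zero_left h

lemma sphereIntegral_mul_axialDeriv (μ : Measure S2) [IsFiniteMeasure μ] [IsIsometryInvariant μ]
    (b : Fin 3 → ℝ) (p q : MvPolynomial (Fin 3) ℝ) :
    sphereIntegral μ (p * axialDeriv b q) = -sphereIntegral μ (axialDeriv b p * q) := by
  simp only [axialDeriv_apply, Finset.mul_sum, Finset.sum_mul, map_sum, ← smul_eq_C_mul,
    mul_smul_comm, smul_mul_assoc, map_smul, sphereIntegral_mul_angularDeriv μ _ p, smul_neg,
    Finset.sum_neg_distrib]

lemma sphereIntegral_mul_sphericalLaplacian (μ : Measure S2) [IsFiniteMeasure μ]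
    [IsIsometryInvariant μ] (p q : MvPolynomial (Fin 3) ℝ) :
    sphereIntegral μ (p * sphericalLaplacian q) =
      -sphereIntegral μ (∑ i, angularDeriv i p * angularDeriv i q) := by
  simp only [sphericalLaplacian_apply, Finset.mul_sum, map_sum,
    sphereIntegral_mul_angularDeriv μ _ p, Finset.sum_neg_distrib]

end InvariantIntegration

section ApproximateIdentity

open MvPolynomial Filter

/-- The polynomial `(1 - ⟨x, ·⟩) / 2`, the squared sine of half the spherical distance to `x`. -/
def haversine (x : S2) : MvPolynomial (Fin 3) ℝ := C (1 / 2) * (1 - linearForm x.1.ofLp)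

/-- Partial sums of the power series of `log (1 - s)` at `s = haversine x`; up to normalisation
`log (1 - s)` is the Green's function of the spherical Laplacian with pole at `-x`. -/
def greenPartialSum (x : S2) (N : ℕ) : MvPolynomial (Fin 3) ℝ :=
  -∑ k ∈ Finset.range N, C (1 / (k + 1 : ℝ)) * haversine x ^ (k + 1)

/-- Partial sums of the geometric series of `1 / (1 + ⟨x, ·⟩) = 1 / (2 * (1 - haversine x))`. -/
def poleTruncation (x : S2) (N : ℕ) : MvPolynomial (Fin 3) ℝ :=
  C (1 / 2) * ∑ k ∈ Finset.range N, haversine x ^ k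

lemma eval_haversine (x : S2) (y : V) : eval y.ofLp (haversine x) = (1 - ⟪(x : V), y⟫) / 2 := by
  simp only [haversine, map_mul, map_sub, map_one, eval_C, eval_linearForm]
  ring

lemma eval_haversine_mem_Icc (x y : S2) : eval y.1.ofLp (haversine x) ∈ Set.Icc 0 1 := by
  have h := abs_le.mp (abs_inner_sphere_le_one x y)
  rw [eval_haversine]
  constructor <;> linarith

lemma one_sub_eval_haversine (x y : S2) :
    1 - eval y.1.ofLp (haversine x) = dist y (negS x) ^ 2 / 4 := by
  rw [eval_haversine, Subtype.dist_eq, dist_eq_norm, negS, sub_neg_eq_add, norm_add_sq_real,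
    norm_sphere_coe, norm_sphere_coe, real_inner_comm]
  ring

lemma eval_haversine_negS (x : S2) : eval (negS x).1.ofLp (haversine x) = 1 := by
  have h := one_sub_eval_haversine x (negS x)
  rw [dist_self] at h
  linarith

lemma angularDeriv_haversine (i : Fin 3) (x : S2) :
    angularDeriv i (haversine x) = -C (1 / 2) * angularDeriv i (linearForm x.1.ofLp) := by
  simp [haversine, Derivation.leibniz]

lemma angularDeriv_greenPartialSum (i : Fin 3) (x : S2) (N : ℕ) :
    angularDeriv i (greenPartialSum x N) =
      poleTruncation x N * angularDeriv i (linearForm x.1.ofLp) := by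
  have hterm (k : ℕ) : angularDeriv i (C (1 / (k + 1 : ℝ)) * haversine x ^ (k + 1)) =
      haversine x ^ k * angularDeriv i (haversine x) := by
    rw [← smul_eq_C_mul, Derivation.map_smul, Derivation.leibniz_pow, Nat.add_sub_cancel,
      ← Nat.cast_smul_eq_nsmul ℝ, smul_smul, Nat.cast_succ, one_div_mul_cancel (by positivity),
      one_smul, smul_eq_mul]
  simp only [greenPartialSum, poleTruncation, map_neg, map_sum, hterm, ← Finset.sum_mul,
    angularDeriv_haversine]
  ring

lemma axialDeriv_poleTruncation_self (x : S2) (N : ℕ) :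
    axialDeriv x.1.ofLp (poleTruncation x N) = 0 := by
  have h : axialDeriv x.1.ofLp (haversine x) = 0 := by
    simp [haversine, Derivation.leibniz, axialDeriv_linearForm_self]
  simp [poleTruncation, Derivation.leibniz, Derivation.leibniz_pow, h]

lemma one_add_inner_mul_eval_poleTruncation (x : S2) (y : V) (N : ℕ) :
    (1 + ⟪(x : V), y⟫) * eval y.ofLp (poleTruncation x N) =
      1 - eval y.ofLp (haversine x) ^ N := by
  rw [← mul_neg_geom_sum, eval_haversine]
  simp only [poleTruncation, map_mul, map_sum, map_pow, eval_C, eval_haversine]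
  ring

lemma sphericalLaplacian_haversine (x : S2) :
    sphericalLaplacian (haversine x) = linearForm x.1.ofLp := by
  have hone : sphericalLaplacian (1 : MvPolynomial (Fin 3) ℝ) = 0 := by
    simp [sphericalLaplacian_apply]
  have htwo : C (1 / 2 : ℝ) * 2 = (1 : MvPolynomial (Fin 3) ℝ) := by
    rw [← map_ofNat C 2, ← C_mul, one_div_mul_cancel two_ne_zero, C_1]
  rw [haversine, ← smul_eq_C_mul, map_smul, map_sub, sphericalLaplacian_linearForm, hone,
    smul_eq_C_mul]
  linear_combination htwo * linearForm x.1.ofLp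

lemma eval_linearForm_eq_one_sub_haversine (x : S2) (y : V) :
    eval y.ofLp (linearForm x.1.ofLp) = 1 - 2 * eval y.ofLp (haversine x) := by
  rw [eval_linearForm, eval_haversine]
  ring

lemma sum_eval_angularDeriv_haversine_sq (x y : S2) :
    ∑ i, eval y.1.ofLp (angularDeriv i (haversine x)) ^ 2 =
      eval y.1.ofLp (haversine x) * (1 - eval y.1.ofLp (haversine x)) := by
  have hx : x.1.ofLp ⬝ᵥ x.1.ofLp = 1 := by
    rw [← star_trivial x.1.ofLp, ← EuclideanSpace.inner_eq_star_dotProduct, star_trivial,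
      inner_sphere_self]
  have h := congrArg (eval y.1.ofLp) (sum_angularDeriv_linearForm_sq x.1.ofLp)
  simp only [map_sum, map_pow, map_sub, map_mul, eval_C, hx, eval_radiusSq_sphere,
    eval_linearForm_eq_one_sub_haversine] at h
  simp only [angularDeriv_haversine, map_mul, map_neg, eval_C, mul_pow, ← Finset.mul_sum, h]
  ring

lemma eval_sphericalLaplacian_haversine_pow (x y : S2) (k : ℕ) :
    eval y.1.ofLp (sphericalLaplacian (haversine x ^ (k + 1))) =
      (k + 1) * ((k + 1) * eval y.1.ofLp (haversine x) ^ k -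
        (k + 2) * eval y.1.ofLp (haversine x) ^ (k + 1)) := by
  rw [sphericalLaplacian_pow, sphericalLaplacian_haversine]
  simp only [map_mul, map_add, map_sum, map_pow, sum_eval_angularDeriv_haversine_sq, map_natCast,
    map_one, eval_linearForm_eq_one_sub_haversine]
  cases k
  · simp
  · simp only [Nat.add_sub_cancel, pow_succ]
    ring

lemma eval_sphericalLaplacian_greenPartialSum (x y : S2) (N : ℕ) :
    eval y.1.ofLp (sphericalLaplacian (greenPartialSum x N)) =
      (N + 1) * eval y.1.ofLp (haversine x) ^ N - 1 := by
  have hterm (k : ℕ) :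
      eval y.1.ofLp (sphericalLaplacian (C (1 / (k + 1 : ℝ)) * haversine x ^ (k + 1))) =
        (k + 1) * eval y.1.ofLp (haversine x) ^ k -
          ((k + 1 : ℕ) + 1) * eval y.1.ofLp (haversine x) ^ (k + 1) := by
    rw [← smul_eq_C_mul, map_smul, smul_eval, eval_sphericalLaplacian_haversine_pow]
    field_simp
    push_cast
    ring
  simp only [greenPartialSum, map_neg, map_sum, hterm]
  rw [Finset.sum_range_sub' (fun k : ℕ => ((k : ℝ) + 1) * eval y.1.ofLp (haversine x) ^ k)]
  simp

lemma sphereIntegral_mul_sphericalLaplacian_greenPartialSum (μ : Measure S2) [IsFiniteMeasure μ]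
    (x : S2) (p : MvPolynomial (Fin 3) ℝ) (N : ℕ) :
    sphereIntegral μ (p * sphericalLaplacian (greenPartialSum x N)) =
      (N + 1) * sphereIntegral μ (haversine x ^ N * p) - sphereIntegral μ p := by
  have h := sphereIntegral_congr μ (p := p * sphericalLaplacian (greenPartialSum x N))
    (q := (N + 1 : ℝ) • (haversine x ^ N * p) - p) fun y => by
      simp only [map_mul, map_sub, map_pow, smul_eval, eval_sphericalLaplacian_greenPartialSum]
      ring
  rw [h, map_sub, map_smul, smul_eq_mul]

variable (μ : Measure S2) [IsProbabilityMeasure μ] [IsIsometryInvariant μ]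

lemma sphereIntegral_haversine_pow (x : S2) (N : ℕ) :
    sphereIntegral μ (haversine x ^ N) = 1 / (N + 1) := by
  have h := sphereIntegral_mul_sphericalLaplacian_greenPartialSum μ x 1 N
  have hone : sphereIntegral μ 1 = 1 := by simp [sphereIntegral]
  rw [sphereIntegral_mul_sphericalLaplacian, mul_one, hone] at h
  simp only [Derivation.map_one_eq_zero, zero_mul, Finset.sum_const_zero, map_zero,
    neg_zero] at h
  rw [eq_div_iff (by positivity)]
  linarith

instance instNullSingletonClassOfIsIsometryInvariant : NullSingletonClass μ where
  measure_singleton x := by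
    have hone : eval x.1.ofLp (haversine (negS x)) = 1 := by
      simpa [negS] using eval_haversine_negS (negS x)
    have hle (N : ℕ) : μ.real {x} ≤ 1 / (N + 1) := by
      rw [← sphereIntegral_haversine_pow μ (negS x) N]
      refine le_trans ?_ (mul_meas_ge_le_integral_of_nonneg
        (.of_forall fun y => ?_) (integrable_of_continuous (continuous_eval_sphere _)) 1)
      · rw [one_mul]
        exact measureReal_mono (by simp [hone])
      · simpa using pow_nonneg (eval_haversine_mem_Icc (negS x) y).1 N
    exact (measureReal_eq_zero_iff).mp
      ((ge_of_tendsto' tendsto_one_div_add_atTop_nhds_zero_nat hle).antisymm measureReal_nonneg)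

instance instIsOpenPosMeasureOfIsIsometryInvariant : μ.IsOpenPosMeasure where
  open_pos U hU := by
    rintro ⟨x, hx⟩ hzero
    obtain ⟨ε, hε, hball⟩ := Metric.isOpen_iff.mp hU x hx
    set c : ℝ := max 0 (1 - ε ^ 2 / 4)
    have hc : c < 1 := max_lt one_pos (by linarith [pow_pos hε 2])
    have hle {y : S2} (hy : y ∉ U) : eval y.1.ofLp (haversine (negS x)) ≤ c := by
      have hdist : ε ≤ dist y x := not_lt.mp fun h => hy (hball h)
      have h := one_sub_eval_haversine (negS x) y
      rw [show negS (negS x) = x from Subtype.ext (neg_neg _)] at h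
      exact le_max_of_le_right (by nlinarith)
    have hbound (N : ℕ) : 1 ≤ N * c ^ N + c ^ N := by
      have h : sphereIntegral μ (haversine (negS x) ^ N) ≤ ∫ _, c ^ N ∂μ := by
        refine integral_mono_ae (integrable_of_continuous (continuous_eval_sphere _))
          (integrable_const _) ?_
        filter_upwards [measure_eq_zero_iff_ae_notMem.mp hzero] with y hy
        simpa using pow_le_pow_left₀ (eval_haversine_mem_Icc _ y).1 (hle hy) N
      rw [sphereIntegral_haversine_pow, integral_const, probReal_univ, one_smul,
        div_le_iff₀ (by positivity)] at h
      linarith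
    have hlim := (tendsto_self_mul_const_pow_of_lt_one (le_max_left _ _) hc).add
      (tendsto_pow_atTop_nhds_zero_of_lt_one (le_max_left _ _) hc)
    linarith [ge_of_tendsto' hlim hbound]

lemma tendsto_integral_haversine_pow_smul (x : S2) {g : S2 → ℝ} (hg : Continuous g) :
    Tendsto (fun N : ℕ => (N + 1) * ∫ y, eval y.1.ofLp (haversine x) ^ N * g y ∂μ) atTop
      (nhds (g (negS x))) := by
  have h := tendsto_setIntegral_pow_smul_of_unique_maximum_of_isCompact_of_continuousOn (μ := μ)
    (s := Set.univ) (x₀ := negS x) isCompact_univ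
    (continuous_eval_sphere (haversine x)).continuousOn
    (fun y _ hy => by
      have hpos := one_sub_eval_haversine x y ▸ div_pos (pow_pos (dist_pos.mpr hy) 2) four_pos
      rw [eval_haversine_negS]
      linarith)
    (fun y _ => (eval_haversine_mem_Icc x y).1)
    (by rw [eval_haversine_negS]; exact one_pos) (by simp) hg.continuousOn
  have hmass (N : ℕ) : ∫ y : S2, eval y.1.ofLp (haversine x) ^ N ∂μ = 1 / (N + 1) := by
    simpa [sphereIntegral] using sphereIntegral_haversine_pow μ x N
  simpa [hmass] using h

end ApproximateIdentity

section CrossProduct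

open scoped Matrix

/-- The cross product on Euclidean space, as a continuous bilinear map. -/
def cross : V →L[ℝ] V →L[ℝ] V :=
  ((crossProduct.compl₁₂ (WithLp.linearEquiv 2 ℝ (Fin 3 → ℝ)).toLinearMap
    (WithLp.linearEquiv 2 ℝ (Fin 3 → ℝ)).toLinearMap).compr₂
      (WithLp.linearEquiv 2 ℝ (Fin 3 → ℝ)).symm.toLinearMap).toContinuousBilinearMap

lemma cross_eq_toLp (a b : V) : cross a b = WithLp.toLp 2 (a.ofLp ⨯₃ b.ofLp) := rfl

lemma inner_eq_dotProduct (a b : V) : ⟪a, b⟫ = a.ofLp ⬝ᵥ b.ofLp := by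
  rw [EuclideanSpace.inner_eq_star_dotProduct, star_trivial, dotProduct_comm]

lemma inner_cross_self_left (a b : V) : ⟪a, cross a b⟫ = 0 := by
  rw [inner_eq_dotProduct]
  exact dot_self_cross _ _

lemma inner_cross_cross (a b c d : V) :
    ⟪cross a b, cross c d⟫ = ⟪a, c⟫ * ⟪b, d⟫ - ⟪a, d⟫ * ⟪b, c⟫ := by
  simp only [inner_eq_dotProduct]
  exact cross_dot_cross _ _ _ _

lemma cross_cross_eq_inner_smul_sub (a b c : V) :
    cross a (cross b c) = ⟪a, c⟫ • b - ⟪a, b⟫ • c := by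
  rw [real_inner_comm b a, inner_eq_dotProduct, inner_eq_dotProduct]
  exact congrArg (WithLp.toLp 2) (cross_cross_eq_smul_sub_smul' a.ofLp b.ofLp c.ofLp)

lemma cross_self_eq_zero (a : V) : cross a a = 0 := congrArg (WithLp.toLp 2) (cross_self a.ofLp)

lemma inner_cross_smul (a b c d : V) :
    ⟪a, cross b c⟫ • d = ⟪a, d⟫ • cross b c + ⟪b, d⟫ • cross c a + ⟪c, d⟫ • cross a b := by
  ext i
  fin_cases i <;>
    simp [cross_eq_toLp, cross_apply, PiLp.inner_apply, Fin.sum_univ_three] <;> ring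

end CrossProduct

section ParallelTransport

open MvPolynomial Filter

lemma mem_plane {x : S2} {v : V} : v ∈ plane x ↔ ⟪(x : V), v⟫ = 0 :=
  mem_orthogonal_singleton_iff_inner_right

lemma projPerp_eq (x : S2) (v : V) : projPerp x v = v - ⟪(x : V), v⟫ • (x : V) := by
  change (ℝ ∙ (x : V))ᗮ.starProjection v = _
  rw [starProjection_orthogonal_val, starProjection_unit_singleton ℝ (norm_sphere_coe x)]

lemma Cker_apply {x y : S2} {v : V} (hv : v ∈ plane y) (ht : 1 - ⟪(x : V), y⟫ ^ 2 ≠ 0) :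
    Cker x y v =
      v - (⟪(x : V), v⟫ / (1 - ⟪(x : V), y⟫ ^ 2)) • ((x : V) - ⟪(x : V), y⟫ • (y : V)) := by
  refine eq_starProjection_of_mem_of_inner_eq_zero ⟨mem_plane.mpr ?_, mem_plane.mpr ?_⟩ ?_
  · simp only [inner_sub_right, inner_smul_right, inner_sphere_self]
    field_simp
    ring
  · simp only [inner_sub_right, inner_smul_right, inner_sphere_self, mem_plane.mp hv,
      real_inner_comm (x : V) y]
    ring
  · rintro w ⟨hx, hy⟩
    simp [inner_smul_left, inner_sub_left, mem_plane.mp hx, mem_plane.mp hy]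

lemma norm_projPerp_sq (x y : S2) : ‖projPerp x y‖ ^ 2 = 1 - ⟪(x : V), y⟫ ^ 2 := by
  rw [projPerp_eq, norm_sub_sq_real, norm_smul, inner_smul_right, norm_sphere_coe,
    norm_sphere_coe, real_inner_comm (x : V) y, mul_one, Real.norm_eq_abs, sq_abs]
  ring

lemma Oker_apply (x : S2) {y : S2} {v : V} (hv : v ∈ plane y) :
    Oker x y v =
      (⟪(x : V), v⟫ / (1 - ⟪(x : V), y⟫ ^ 2)) • ((y : V) - ⟪(x : V), y⟫ • (x : V)) := by
  have hnorm : ‖projPerp y x‖ = ‖projPerp x y‖ := by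
    rw [← sq_eq_sq₀ (norm_nonneg _) (norm_nonneg _), norm_projPerp_sq, norm_projPerp_sq,
      real_inner_comm]
  change ⟪oVec y x, v⟫ • oVec x y = _
  rw [oVec, oVec, hnorm, inner_smul_left, smul_smul, ← norm_projPerp_sq, projPerp_eq y,
    inner_sub_left, inner_smul_left, mem_plane.mp hv, projPerp_eq x y]
  congr 1
  simp only [conj_trivial]
  ring

/-- The map `v ↦ v - c ⟨x, v⟩ (x + y)`. On `y^⊥`, the weight `c = (1 + ⟨x, y⟩)⁻¹` gives the
parallel transport along the shorter great circle arc from `y` to `x`; truncations of this weight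
give polynomial approximations. -/
def weightedTransport (c : ℝ) (x y : S2) : V →L[ℝ] V :=
  ContinuousLinearMap.id ℝ V - (c • innerSL ℝ (x : V)).smulRight ((x : V) + y)

/-- The parallel transport `y^⊥ → x^⊥` along the shorter great circle arc. At `y = -x` the junk
value `0⁻¹ = 0` makes it the identity. -/
def transport (x y : S2) : V →L[ℝ] V := weightedTransport (1 + ⟪(x : V), y⟫)⁻¹ x y

lemma weightedTransport_apply (c : ℝ) (x y : S2) (v : V) :
    weightedTransport c x y v = v - (c * ⟪(x : V), v⟫) • ((x : V) + y) := rfl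

lemma transport_apply (x y : S2) (v : V) :
    transport x y v = v - ((1 + ⟪(x : V), y⟫)⁻¹ * ⟪(x : V), v⟫) • ((x : V) + y) := rfl

lemma Tker_apply {x y : S2} {v : V} (hv : v ∈ plane y) (ht : 1 - ⟪(x : V), y⟫ ^ 2 ≠ 0) :
    Tker x y v = transport x y v := by
  rw [Tker, LinearMap.sub_apply, Cker_apply hv ht, Oker_apply x hv, transport_apply]
  set t := ⟪(x : V), y⟫
  have ht' : 1 + t ≠ 0 := fun h => ht (by linear_combination (1 - t) * h)
  have hcoeff : (1 + t)⁻¹ * ⟪(x : V), v⟫ = (1 - t) * (⟪(x : V), v⟫ / (1 - t ^ 2)) := by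
    field_simp
    ring
  rw [hcoeff]
  module

lemma Oker_eq_transport {x y : S2} {v : V} (hv : v ∈ plane y)
    (ht : 1 - ⟪(x : V), y⟫ ^ 2 ≠ 0) :
    Oker x y v = (1 / 2 : ℝ) • (transport (negS x) y v - transport x y v) := by
  rw [Oker_apply x hv, transport_apply, transport_apply, negS]
  simp only [inner_neg_left]
  set t := ⟪(x : V), y⟫
  have hplus : 1 + t ≠ 0 := fun h => ht (by linear_combination (1 - t) * h)
  have hminus : 1 + -t ≠ 0 := fun h => ht (by linear_combination (1 + t) * h)
  have hcoeff_plus : (1 + t)⁻¹ = (1 - t) / (1 - t ^ 2) := by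
    field_simp
    ring
  have hcoeff_minus : (1 + -t)⁻¹ = (1 + t) / (1 - t ^ 2) := by
    field_simp
    ring
  rw [hcoeff_plus, hcoeff_minus]
  module

lemma norm_weightedTransport_le {c : ℝ} {x y : S2} {v : V} (hv : v ∈ plane y) (hc : 0 ≤ c)
    (hc' : c * (1 + ⟪(x : V), y⟫) ≤ 1) : ‖weightedTransport c x y v‖ ≤ ‖v‖ := by
  refine (sq_le_sq₀ (norm_nonneg _) (norm_nonneg _)).mp ?_
  have hsum : ‖(x : V) + y‖ ^ 2 = 2 * (1 + ⟪(x : V), y⟫) := by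
    rw [norm_add_sq_real, norm_sphere_coe, norm_sphere_coe]
    ring
  rw [weightedTransport_apply, norm_sub_sq_real, inner_smul_right, norm_smul, mul_pow, hsum,
    inner_add_right, real_inner_comm (y : V) v, real_inner_comm (x : V) v, mem_plane.mp hv,
    Real.norm_eq_abs, sq_abs]
  nlinarith [mul_nonneg (mul_nonneg hc (sq_nonneg ⟪(x : V), v⟫)) (sub_nonneg.mpr hc')]

lemma one_add_inner_nonneg (x y : S2) : 0 ≤ 1 + ⟪(x : V), y⟫ := by
  linarith [(abs_le.mp (abs_inner_sphere_le_one x y)).1]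

lemma norm_transport_le (x : S2) {y : S2} {v : V} (hv : v ∈ plane y) :
    ‖transport x y v‖ ≤ ‖v‖ :=
  norm_weightedTransport_le hv (inv_nonneg.mpr (one_add_inner_nonneg x y)) inv_mul_le_one

lemma transport_cross {x y : S2} {v : V} (hv : v ∈ plane y) (ht : 1 + ⟪(x : V), y⟫ ≠ 0) :
    transport x y (cross y v) = cross x (transport x y v) := by
  have h := inner_cross_smul (x : V) y v ((x : V) + y)
  rw [inner_add_right, inner_add_right, inner_add_right, inner_sphere_self, inner_sphere_self,
    real_inner_comm (x : V) y, real_inner_comm (y : V) v, real_inner_comm (x : V) v,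
    mem_plane.mp hv, add_zero] at h
  have hanti : cross v x = -cross (x : V) v :=
    congrArg (WithLp.toLp 2) (cross_anticomm x.1.ofLp v.ofLp).symm
  rw [transport_apply, transport_apply, mul_smul, h, map_sub, map_smul, map_add, cross_self_eq_zero,
    hanti]
  match_scalars <;> field_simp <;> ring

end ParallelTransport

section TangentFields

open MvPolynomial Filter

/-- The continuous tangent vector fields on the sphere. -/
def tangentFields : Submodule ℝ C(S2, V) where
  carrier := {s | ∀ y, s y ∈ plane y}
  add_mem' hs hs' y := add_mem (hs y) (hs' y)
  zero_mem' _ := zero_mem _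
  smul_mem' c _ hs y := smul_mem _ c (hs y)

/-- The vector field `y ↦ y × ∇p(y)` on the sphere. -/
def curl : MvPolynomial (Fin 3) ℝ →ₗ[ℝ] tangentFields where
  toFun p :=
    ⟨⟨fun y => WithLp.toLp 2 fun i => eval y.1.ofLp (angularDeriv i p),
      (PiLp.continuous_toLp 2 _).comp (continuous_pi fun i => continuous_eval_sphere _)⟩,
      fun y => mem_plane.mpr (by
        simpa [PiLp.inner_apply, mul_comm] using
          congrArg (eval y.1.ofLp) (sum_X_mul_angularDeriv p))⟩
  map_add' p q := by
    ext y i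
    simp
  map_smul' a p := by
    ext y i
    simp [smul_eval]

/-- The rotation of tangent vectors by a quarter turn, `s ↦ (y ↦ y × s y)`. -/
def quarterTurn : tangentFields →ₗ[ℝ] tangentFields where
  toFun s := ⟨⟨fun y => cross y (s.1 y), by fun_prop⟩,
    fun y => mem_plane.mpr (inner_cross_self_left _ _)⟩
  map_add' s s' := by
    ext1; ext1 y
    exact map_add (cross y) _ _
  map_smul' a s := by
    ext1; ext1 y
    exact map_smul (cross y) _ _

lemma curl_apply (p : MvPolynomial (Fin 3) ℝ) (y : S2) (i : Fin 3) :
    (curl p).1 y i = eval y.1.ofLp (angularDeriv i p) := rfl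

lemma quarterTurn_apply (s : tangentFields) (y : S2) :
    (quarterTurn s).1 y = cross y (s.1 y) := rfl

lemma inner_curl (w : V) (p : MvPolynomial (Fin 3) ℝ) (y : S2) :
    ⟪w, (curl p).1 y⟫ = eval y.1.ofLp (axialDeriv w.ofLp p) := by
  simp [PiLp.inner_apply, curl_apply, axialDeriv_apply, mul_comm]

section Transport

variable (μ : Measure S2)

lemma ae_one_sub_inner_sq_ne_zero [NullSingletonClass μ] (x : S2) :
    ∀ᵐ y : S2 ∂μ, 1 - ⟪(x : V), y⟫ ^ 2 ≠ 0 := by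
  filter_upwards [(Set.toFinite {x, negS x}).countable.ae_notMem μ] with y hy hzero
  refine hy ((sq_eq_one_iff.mp (sub_eq_zero.mp hzero).symm).imp (fun h => ?_)
    fun h => ?_)
  · exact Subtype.ext
      ((inner_eq_one_iff_of_norm_eq_one (norm_sphere_coe x) (norm_sphere_coe y)).mp h).symm
  · exact Subtype.ext (neg_eq_iff_eq_neg.mp
      ((inner_eq_neg_one_iff_of_norm_eq_one (norm_sphere_coe x) (norm_sphere_coe y)).mp h).symm)

lemma integrable_transport [IsFiniteMeasure μ] (x : S2) (s : tangentFields) :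
    Integrable (fun y => transport x y (s.1 y)) μ := by
  refine Integrable.mono (integrable_of_continuous s.1.continuous)
    (Measurable.aestronglyMeasurable ?_) (.of_forall fun y => norm_transport_le x (s.2 y))
  simp only [transport_apply]
  fun_prop

lemma integral_transport_quarterTurn [IsFiniteMeasure μ] [NullSingletonClass μ] (x : S2)
    (s : tangentFields) :
    ∫ y, transport x y ((quarterTurn s).1 y) ∂μ = cross x (∫ y, transport x y (s.1 y) ∂μ) := by
  rw [← ContinuousLinearMap.integral_comp_comm _ (integrable_transport μ x s)]
  refine integral_congr_ae ?_
  filter_upwards [ae_one_sub_inner_sq_ne_zero μ x] with y hy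
  exact transport_cross (s.2 y) fun h => hy (by linear_combination (1 - ⟪(x : V), y⟫) * h)

lemma integral_Oker [IsFiniteMeasure μ] [NullSingletonClass μ] (x : S2) (s : tangentFields) :
    ∫ y, Oker x y (s.1 y) ∂μ = (1 / 2 : ℝ) •
      (∫ y, transport (negS x) y (s.1 y) ∂μ - ∫ y, transport x y (s.1 y) ∂μ) := by
  rw [← integral_sub (integrable_transport μ _ s) (integrable_transport μ _ s), ← integral_smul]
  refine integral_congr_ae ?_
  filter_upwards [ae_one_sub_inner_sq_ne_zero μ x] with y hy
  exact Oker_eq_transport (s.2 y) hy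

lemma integral_Tker [NullSingletonClass μ] (x : S2) (s : tangentFields) :
    ∫ y, Tker x y (s.1 y) ∂μ = ∫ y, transport x y (s.1 y) ∂μ := by
  refine integral_congr_ae ?_
  filter_upwards [ae_one_sub_inner_sq_ne_zero μ x] with y hy
  exact Tker_apply (s.2 y) hy

lemma continuous_weightedTransport_poleTruncation (x : S2) (N : ℕ) (s : tangentFields) :
    Continuous fun y : S2 =>
      weightedTransport (eval y.1.ofLp (poleTruncation x N)) x y (s.1 y) := by
  have := continuous_eval_sphere (poleTruncation x N)
  simp only [weightedTransport_apply]
  fun_prop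

lemma tendsto_eval_poleTruncation {x y : S2} (h : 1 + ⟪(x : V), y⟫ ≠ 0) :
    Tendsto (fun N => eval y.1.ofLp (poleTruncation x N)) atTop
      (nhds (1 + ⟪(x : V), y⟫)⁻¹) := by
  have hlt : eval y.1.ofLp (haversine x) < 1 := by
    have := (one_add_inner_nonneg x y).lt_of_ne' h
    rw [eval_haversine]
    linarith
  have hlim := ((tendsto_pow_atTop_nhds_zero_of_lt_one (eval_haversine_mem_Icc x y).1
    hlt).const_sub 1).const_mul (1 + ⟪(x : V), y⟫)⁻¹
  rw [sub_zero, mul_one] at hlim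
  refine hlim.congr fun N => ?_
  rw [← one_add_inner_mul_eval_poleTruncation, inv_mul_cancel_left₀ h]

lemma tendsto_integral_weightedTransport_poleTruncation [IsFiniteMeasure μ]
    [NullSingletonClass μ] (x : S2) (s : tangentFields) :
    Tendsto (fun N => ∫ y, weightedTransport (eval y.1.ofLp (poleTruncation x N)) x y (s.1 y) ∂μ)
      atTop (nhds (∫ y, transport x y (s.1 y) ∂μ)) := by
  refine tendsto_integral_of_dominated_convergence (fun y => ‖s.1 y‖)
    (fun N => (continuous_weightedTransport_poleTruncation x N s).aestronglyMeasurable)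
    (integrable_of_continuous s.1.continuous).norm (fun N => .of_forall fun y => ?_) ?_
  · have hs := (eval_haversine_mem_Icc x y).1
    refine norm_weightedTransport_le (s.2 y) ?_ ?_
    · simp only [poleTruncation, map_mul, eval_C, map_sum, map_pow]
      positivity
    · rw [mul_comm, one_add_inner_mul_eval_poleTruncation]
      exact sub_le_self _ (pow_nonneg hs N)
  · filter_upwards [ae_one_sub_inner_sq_ne_zero μ x] with y hy
    have h := tendsto_eval_poleTruncation (x := x) (y := y)
      fun h => hy (by linear_combination (1 - ⟪(x : V), y⟫) * h)
    exact ((h.mul_const _).smul_const _).const_sub _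

-- Rotations about `x` fix the weight, so integrating by parts along them moves the derivative in
-- `⟨x, curl p⟩` onto the linear factors `x + y`.
lemma integral_weightedTransport_curl [IsFiniteMeasure μ] [IsIsometryInvariant μ] (x : S2)
    (N : ℕ) (p : MvPolynomial (Fin 3) ℝ) (i : Fin 3) :
    (∫ y, weightedTransport (eval y.1.ofLp (poleTruncation x N)) x y ((curl p).1 y) ∂μ) i =
      sphereIntegral μ (greenPartialSum x N * angularDeriv i p) := by
  set ψ := poleTruncation x N
  set rot := axialDeriv x.1.ofLp
  have hcoord : (∫ y, weightedTransport (eval y.1.ofLp ψ) x y ((curl p).1 y) ∂μ) i =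
      sphereIntegral μ (angularDeriv i p - ((x : V) i • (ψ * rot p) + ψ * X i * rot p)) := by
    rw [eval_integral_piLp fun j => integrable_of_continuous ((PiLp.continuous_apply 2 _ j).comp
      (continuous_weightedTransport_poleTruncation x N (curl p)))]
    refine integral_congr_ae (.of_forall fun y => ?_)
    simp only [weightedTransport_apply, inner_curl, PiLp.sub_apply, PiLp.smul_apply,
      PiLp.add_apply, curl_apply, map_sub, map_add, map_mul, smul_eval, eval_X, smul_eq_mul]
    ring
  have hψ : rot ψ = 0 := axialDeriv_poleTruncation_self x N
  have hX : rot (ψ * X i) = -angularDeriv i (greenPartialSum x N) := by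
    rw [Derivation.leibniz, hψ, smul_zero, add_zero, angularDeriv_greenPartialSum,
      angularDeriv_linearForm, smul_eq_mul, mul_neg, neg_neg]
  rw [hcoord, map_sub, map_add, map_smul, sphereIntegral_mul_axialDeriv,
    sphereIntegral_mul_axialDeriv, sphereIntegral_angularDeriv, sphereIntegral_mul_angularDeriv,
    hψ, hX]
  simp

lemma integral_transport_curl_sphericalLaplacian [IsProbabilityMeasure μ]
    [IsIsometryInvariant μ] (x : S2) (p : MvPolynomial (Fin 3) ℝ) :
    ∫ y, transport x y ((curl (sphericalLaplacian p)).1 y) ∂μ = (curl p).1 (negS x) := by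
  ext i
  have hsymm (N : ℕ) :
      sphereIntegral μ (greenPartialSum x N * angularDeriv i (sphericalLaplacian p)) =
        (N + 1) * sphereIntegral μ (haversine x ^ N * angularDeriv i p) := by
    have h := sphereIntegral_mul_sphericalLaplacian_greenPartialSum μ x (angularDeriv i p) N
    rw [sphereIntegral_angularDeriv, sub_zero] at h
    rw [← h, ← sphericalLaplacian_angularDeriv, sphereIntegral_mul_sphericalLaplacian,
      sphereIntegral_mul_sphericalLaplacian]
    simp only [mul_comm]
  have hlim := ((PiLp.continuous_apply 2 _ i).tendsto _).comp
    (tendsto_integral_weightedTransport_poleTruncation μ x (curl (sphericalLaplacian p)))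
  refine tendsto_nhds_unique hlim ?_
  simp only [Function.comp_def, integral_weightedTransport_curl, hsymm]
  simpa [sphereIntegral, curl_apply] using
    tendsto_integral_haversine_pow_smul μ x (continuous_eval_sphere (angularDeriv i p))

end Transport

end TangentFields

section VectorHarmonicFields

open MvPolynomial

lemma eval_smul_of_isHomogeneous {σ R : Type*} [CommSemiring R] {n : ℕ} {p : MvPolynomial σ R}
    (hp : p.IsHomogeneous n) (c : R) (x : σ → R) : eval (c • x) p = c ^ n * eval x p := by
  rw [eval_eq, eval_eq, Finset.mul_sum]
  refine Finset.sum_congr rfl fun d hd => ?_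
  have hdeg : ∑ i ∈ d.support, d i = n := by
    rw [← Finsupp.degree_apply, Finsupp.degree_eq_weight_one]
    exact hp (mem_support_iff.mp hd)
  simp only [Pi.smul_apply, smul_eq_mul, mul_pow]
  rw [Finset.prod_mul_distrib, Finset.prod_pow_eq_pow_sum, hdeg, mul_left_comm]

lemma eq_zero_of_forall_eval_sphere {n : ℕ} {p : MvPolynomial (Fin 3) ℝ} (hp : p.IsHomogeneous n)
    (h : ∀ y : S2, eval y.1.ofLp p = 0) : p = 0 := by
  refine hp.eq_zero_of_forall_eval_eq_zero fun r => ?_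
  obtain ⟨y, c, hyc⟩ : ∃ (y : S2) (c : ℝ), c • y.1.ofLp = r := by
    rcases eq_or_ne (WithLp.toLp 2 r : V) 0 with h0 | h0
    · exact ⟨⟨EuclideanSpace.basisFun (Fin 3) ℝ 0, by simp⟩, 0,
        (zero_smul ℝ _).trans (congrArg WithLp.ofLp h0).symm⟩
    · refine ⟨⟨‖(WithLp.toLp 2 r : V)‖⁻¹ • WithLp.toLp 2 r, ?_⟩, ‖(WithLp.toLp 2 r : V)‖,
        smul_inv_smul₀ (norm_ne_zero_iff.mpr h0) r⟩
      exact mem_sphere_zero_iff_norm.mpr (norm_smul_inv_norm (𝕜 := ℝ) h0)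
  rw [← hyc, eval_smul_of_isHomogeneous hp, h, mul_zero]

/-- The curls of the solid harmonics of degree `m + 1`, rotated by `j` quarter turns; for `j = 0, 1`
they make up the eigenfields of the parallel translation operator. -/
def vectorHarmonicFields (m j : ℕ) : Submodule ℝ tangentFields :=
  (harmonicSubmodule (Fin 3) ℝ (m + 1)).map ((quarterTurn ^ j).comp curl)

/-- The number `(-1)ᵐ / ((m + 1) (m + 2))`, the paper's `λ_n` for `n = m + 1`. -/
def transportEigenvalue (m : ℕ) : ℝ := (-1) ^ m / ((m + 1) * (m + 2))

/-- The gradient of a polynomial as a vector field on Euclidean space. -/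
def polyGradient (p : MvPolynomial (Fin 3) ℝ) (y : V) : V :=
  WithLp.toLp 2 fun i => eval y.ofLp (pderiv i p)

/-- The tangential part of the vector field `y ↦ q(y) a` on the sphere. -/
def tangentialField (a : V) : MvPolynomial (Fin 3) ℝ →ₗ[ℝ] tangentFields where
  toFun q :=
    ⟨⟨fun y => eval y.1.ofLp q • projPerp y a, by
        have := continuous_eval_sphere q
        simp only [projPerp_eq]
        fun_prop⟩,
      fun y => smul_mem _ _ (Subtype.prop _)⟩
  map_add' p q := by
    ext1; ext1 y
    simp [add_smul]
  map_smul' c q := by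
    ext1; ext1 y
    simp [smul_eval, mul_smul]

lemma tangentialField_apply (a : V) (q : MvPolynomial (Fin 3) ℝ) (y : S2) :
    (tangentialField a q).1 y = eval y.1.ofLp q • (a - ⟪(y : V), a⟫ • (y : V)) :=
  congrArg (eval y.1.ofLp q • ·) (projPerp_eq y a)

lemma quarterTurn_quarterTurn (s : tangentFields) : quarterTurn (quarterTurn s) = (-1 : ℝ) • s := by
  ext1; ext1 y
  change (quarterTurn (quarterTurn s)).1 y = (-1 : ℝ) • s.1 y
  rw [quarterTurn_apply, quarterTurn_apply, cross_cross_eq_inner_smul_sub, mem_plane.mp (s.2 y),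
    inner_sphere_self]
  module

lemma curl_eq_cross_polyGradient (p : MvPolynomial (Fin 3) ℝ) (y : S2) :
    (curl p).1 y = cross y (polyGradient p y) := by
  ext i
  fin_cases i <;> simp [curl_apply, angularDeriv_apply, cross_eq_toLp, cross_apply, polyGradient]

lemma inner_polyGradient_of_isHomogeneous {n : ℕ} {p : MvPolynomial (Fin 3) ℝ}
    (hp : p.IsHomogeneous n) (y : V) : ⟪y, polyGradient p y⟫ = n * eval y.ofLp p := by
  simpa [PiLp.inner_apply, polyGradient, mul_comm] using
    congrArg (eval y.ofLp) hp.sum_X_mul_pderiv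

lemma polyGradient_mul (p q : MvPolynomial (Fin 3) ℝ) (y : V) :
    polyGradient (p * q) y =
      eval y.ofLp p • polyGradient q y + eval y.ofLp q • polyGradient p y := by
  ext i
  simp [polyGradient, Derivation.leibniz]

lemma polyGradient_neg (p : MvPolynomial (Fin 3) ℝ) (y : V) :
    polyGradient (-p) y = -polyGradient p y := by
  ext i
  simp [polyGradient]

lemma polyGradient_linearForm (a y : V) : polyGradient (linearForm a.ofLp) y = a := by
  ext i
  simp [polyGradient, linearForm, pderiv_X, Pi.single_apply, Derivation.leibniz]

lemma sum_tangentialField_cross_apply (a : V) (q : MvPolynomial (Fin 3) ℝ) (y : S2) :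
    (∑ j, tangentialField (cross a (EuclideanSpace.basisFun (Fin 3) ℝ j)) (pderiv j q)).1 y =
      cross a (polyGradient q y) - ⟪(y : V), cross a (polyGradient q y)⟫ • (y : V) := by
  have hgrad : polyGradient q y =
      ∑ j, eval y.1.ofLp (pderiv j q) • EuclideanSpace.basisFun (Fin 3) ℝ j :=
    ((EuclideanSpace.basisFun (Fin 3) ℝ).sum_repr (polyGradient q y)).symm
  have hsum : (∑ j, tangentialField (cross a (EuclideanSpace.basisFun (Fin 3) ℝ j))
      (pderiv j q)).1 y = ∑ j, (tangentialField (cross a (EuclideanSpace.basisFun (Fin 3) ℝ j))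
        (pderiv j q)).1 y := by
    rw [Submodule.coe_sum, ContinuousMap.sum_apply]
  rw [hsum, hgrad]
  simp only [tangentialField_apply, map_sum, map_smul, inner_sum, inner_smul_right,
    Finset.sum_smul, smul_sub, smul_smul, Finset.sum_sub_distrib]

-- Expand `y × (a × ∇q)` and `y × (y × ∇(q ⟨a, ·⟩))`: Euler's identity `⟨y, ∇q⟩ = n q` produces
-- the factor `n + 1`.
lemma smul_tangentialField {n : ℕ} {q : MvPolynomial (Fin 3) ℝ} (hq : q.IsHomogeneous n) (a : V) :
    ((n : ℝ) + 1) • tangentialField a q =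
      quarterTurn (∑ j, tangentialField (cross a (EuclideanSpace.basisFun (Fin 3) ℝ j))
        (pderiv j q)) + quarterTurn (curl (-(q * linearForm a.ofLp))) := by
  ext1; ext1 y
  change ((n : ℝ) + 1) • (tangentialField a q).1 y =
    (quarterTurn _).1 y + (quarterTurn (curl (-(q * linearForm a.ofLp)))).1 y
  rw [quarterTurn_apply, quarterTurn_apply, sum_tangentialField_cross_apply,
    curl_eq_cross_polyGradient, map_sub, map_smul, cross_self_eq_zero,
    cross_cross_eq_inner_smul_sub, cross_cross_eq_inner_smul_sub, polyGradient_neg,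
    polyGradient_mul, polyGradient_linearForm, eval_linearForm,
    inner_sphere_self, inner_neg_right, inner_add_right, inner_smul_right, inner_smul_right,
    inner_polyGradient_of_isHomogeneous hq, tangentialField_apply, real_inner_comm (y : V) a]
  module

lemma tangentialField_mem_of_isHomogeneous {S : Submodule ℝ tangentFields}
    (hcurl : ∀ p, curl p ∈ S) (hgrad : ∀ p, quarterTurn (curl p) ∈ S) {n : ℕ}
    {q : MvPolynomial (Fin 3) ℝ} (hq : q.IsHomogeneous n) (a : V) :
    tangentialField a q ∈ S ∧ quarterTurn (tangentialField a q) ∈ S := by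
  suffices hstep : ∀ (n : ℕ) (q : MvPolynomial (Fin 3) ℝ), q.IsHomogeneous n → ∀ a : V,
      (∀ j (b : V), tangentialField b (pderiv j q) ∈ S ∧
        quarterTurn (tangentialField b (pderiv j q)) ∈ S) →
      tangentialField a q ∈ S ∧ quarterTurn (tangentialField a q) ∈ S by
    induction n generalizing q a with
    | zero =>
      refine hstep 0 q hq a fun j b => ?_
      rw [totalDegree_eq_zero_iff_eq_C.mp ((totalDegree_zero_iff_isHomogeneous _).mpr hq),
        pderiv_C, map_zero, map_zero]
      exact ⟨zero_mem S, zero_mem S⟩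
    | succ n ih => exact hstep (n + 1) q hq a fun j => ih hq.pderiv
  intro n q hq a hsum
  have hn : (n : ℝ) + 1 ≠ 0 := n.cast_add_one_ne_zero
  refine ⟨(smul_mem_iff _ hn).mp ?_, (smul_mem_iff _ hn).mp ?_⟩
  · rw [smul_tangentialField hq a, map_sum]
    exact add_mem (sum_mem fun j _ => (hsum j _).2) (hgrad _)
  · rw [← map_smul, smul_tangentialField hq a, map_add, quarterTurn_quarterTurn,
      quarterTurn_quarterTurn]
    exact add_mem (smul_mem _ _ (sum_mem fun j _ => (hsum j _).1)) (smul_mem _ _ (hcurl _))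

lemma curl_radiusSq_mul (q : MvPolynomial (Fin 3) ℝ) : curl (radiusSq (Fin 3) ℝ * q) = curl q := by
  ext y i
  simp [curl_apply, Derivation.leibniz, angularDeriv_radiusSq, eval_radiusSq_sphere]

lemma curl_mem_of_forall_harmonic {S : Submodule ℝ tangentFields}
    (h : ∀ m, ∀ p ∈ harmonicSubmodule (Fin 3) ℝ (m + 1), curl p ∈ S)
    (p : MvPolynomial (Fin 3) ℝ) : curl p ∈ S := by
  have hhom (n : ℕ) : ∀ p : MvPolynomial (Fin 3) ℝ, p.IsHomogeneous n → curl p ∈ S := by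
    induction n using Nat.twoStepInduction with
    | zero =>
      intro p hp
      have hcurl : curl p = 0 := by
        rw [totalDegree_eq_zero_iff_eq_C.mp ((totalDegree_zero_iff_isHomogeneous _).mpr hp)]
        ext y i
        simp [curl_apply]
      rw [hcurl]
      exact zero_mem S
    | one =>
      intro p hp
      exact h 0 p (by rwa [zero_add, harmonicSubmodule_of_lt_two one_lt_two])
    | more n ih _ =>
      intro p hp
      obtain ⟨f, hf, q, hq, rfl⟩ := exists_harmonic_add_radiusSq_mul hp
      rw [map_add, curl_radiusSq_mul]
      exact add_mem (h _ f hf) (ih q hq)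
  rw [← sum_homogeneousComponent p, map_sum]
  exact sum_mem fun i _ => hhom i _ (homogeneousComponent_isHomogeneous i p)

lemma tangentialField_mem {S : Submodule ℝ tangentFields}
    (h : ∀ k : ℕ × Fin 2, vectorHarmonicFields k.1 k.2 ≤ S) (a : V)
    (q : MvPolynomial (Fin 3) ℝ) : tangentialField a q ∈ S := by
  have hcurl : ∀ p, curl p ∈ S :=
    curl_mem_of_forall_harmonic fun m p hp => h (m, 0) (mem_map_of_mem hp)
  have hgrad : ∀ p, quarterTurn (curl p) ∈ S :=
    curl_mem_of_forall_harmonic (S := S.comap quarterTurn)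
      fun m p hp => h (m, 1) (mem_map_of_mem hp)
  rw [← sum_homogeneousComponent q, map_sum]
  exact sum_mem fun i _ => (tangentialField_mem_of_isHomogeneous hcurl hgrad
    (homogeneousComponent_isHomogeneous i q) a).1

lemma sphericalLaplacian_of_mem_harmonicSubmodule {R : Type*} [CommRing R] {n : ℕ}
    {p : MvPolynomial (Fin 3) R} (hp : p ∈ harmonicSubmodule (Fin 3) R n) :
    sphericalLaplacian p = (-(n * (n + 1)) : R) • p := by
  rw [sphericalLaplacian_eq_of_isHomogeneous hp.1, (mem_harmonicSubmodule.mp hp).2, mul_zero,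
    zero_sub, smul_eq_C_mul]
  simp

lemma vectorHarmonicFields_zero (m : ℕ) :
    vectorHarmonicFields m 0 = (harmonicSubmodule (Fin 3) ℝ (m + 1)).map curl := rfl

lemma vectorHarmonicFields_succ (m j : ℕ) :
    vectorHarmonicFields m (j + 1) = (vectorHarmonicFields m j).map quarterTurn := by
  rw [vectorHarmonicFields, vectorHarmonicFields, pow_succ', ← map_comp]
  rfl

lemma apply_negS_of_mem_vectorHarmonicFields {m j : ℕ} {s : tangentFields}
    (hs : s ∈ vectorHarmonicFields m j) (x : S2) :
    s.1 (negS x) = (-1 : ℝ) ^ (m + 1 + j) • s.1 x := by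
  induction j generalizing s with
  | zero =>
    rw [vectorHarmonicFields_zero] at hs
    obtain ⟨p, hp, rfl⟩ := hs
    ext i
    have hneg : (negS x).1.ofLp = (-1 : ℝ) • x.1.ofLp := (neg_one_smul ℝ _).symm
    simp only [curl_apply, PiLp.smul_apply, smul_eq_mul, hneg, add_zero,
      eval_smul_of_isHomogeneous (isHomogeneous_angularDeriv hp.1 i)]
  | succ j ih =>
    rw [vectorHarmonicFields_succ] at hs
    obtain ⟨s, hs, rfl⟩ := hs
    rw [quarterTurn_apply, quarterTurn_apply, ih hs, negS, map_neg, map_smul, neg_apply,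
      ← add_assoc, pow_succ]
    module

section Transport

variable (μ : Measure S2) [IsProbabilityMeasure μ] [IsIsometryInvariant μ]

lemma integral_transport_of_mem_vectorHarmonicFields {m j : ℕ} {s : tangentFields}
    (hs : s ∈ vectorHarmonicFields m j) (x : S2) :
    ∫ y, transport x y (s.1 y) ∂μ = transportEigenvalue m • s.1 x := by
  induction j generalizing s with
  | zero =>
    have hneg := apply_negS_of_mem_vectorHarmonicFields hs x
    rw [vectorHarmonicFields_zero] at hs
    obtain ⟨p, hp, rfl⟩ := hs
    have hsmul : (-((m + 1) * (m + 2)) : ℝ) • ∫ y, transport x y ((curl p).1 y) ∂μ =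
        (curl p).1 (negS x) := by
      rw [← integral_transport_curl_sphericalLaplacian μ x p,
        sphericalLaplacian_of_mem_harmonicSubmodule hp, map_smul, ← integral_smul]
      refine integral_congr_ae (.of_forall fun y => ?_)
      change _ = transport x y ((_ : ℝ) • (curl p).1 y)
      rw [map_smul]
      push_cast
      ring_nf
    have hne : (-((m + 1) * (m + 2)) : ℝ) ≠ 0 := neg_ne_zero.mpr (by positivity)
    rw [← (smul_right_injective V hne).eq_iff, hsmul, hneg, transportEigenvalue, smul_smul]
    congr 1
    field_simp
    ring
  | succ j ih =>
    rw [vectorHarmonicFields_succ] at hs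
    obtain ⟨s, hs, rfl⟩ := hs
    rw [integral_transport_quarterTurn, ih hs, map_smul, quarterTurn_apply]

lemma integral_Oker_of_mem_vectorHarmonicFields {m j : ℕ} {s : tangentFields}
    (hs : s ∈ vectorHarmonicFields m j) (x : S2) :
    ∫ y, Oker x y (s.1 y) ∂μ = (if Even (m + j) then -transportEigenvalue m else 0) • s.1 x := by
  rw [integral_Oker, integral_transport_of_mem_vectorHarmonicFields μ hs,
    integral_transport_of_mem_vectorHarmonicFields μ hs,
    apply_negS_of_mem_vectorHarmonicFields hs, add_right_comm, pow_succ]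
  split_ifs with heven
  · rw [heven.neg_one_pow]
    module
  · rw [(Nat.not_even_iff_odd.mp heven).neg_one_pow]
    module

end Transport

end VectorHarmonicFields

section Sections

open MvPolynomial

variable (μ : Measure S2)

/-- A continuous tangent field as an element of the Hilbert space of sections. -/
def toSection [IsFiniteMeasure μ] : tangentFields →ₗ[ℝ] Hsub μ :=
  LinearMap.codRestrict (Hsub μ)
    ((ContinuousMap.toLp 2 μ ℝ : C(S2, V) →L[ℝ] Lp V 2 μ).toLinearMap ∘ₗ tangentFields.subtype)
    fun s => by
      filter_upwards [ContinuousMap.coeFn_toLp (p := 2) (𝕜 := ℝ) μ s.1] with x hx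
      exact hx ▸ s.2 x

instance instCompleteSpaceHsub : CompleteSpace (Hsub μ) := by
  refine (IsSeqClosed.isClosed fun f g hf hfg => ?_).completeSpace_coe
  obtain ⟨ns, _, hns⟩ := (tendstoInMeasure_of_tendsto_Lp hfg).exists_seq_tendsto_ae
  filter_upwards [hns, ae_all_iff.mpr hf] with x hlim hmem
  exact (plane x).closed_of_finiteDimensional.mem_of_tendsto hlim (.of_forall fun n => hmem (ns n))

lemma inner_Hsub (f g : Hsub μ) : ⟪f, g⟫ = ∫ x, ⟪f.1 x, g.1 x⟫ ∂μ := by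
  rw [coe_inner, L2.inner_def]

variable [IsFiniteMeasure μ]

lemma coeFn_toSection (s : tangentFields) : (toSection μ s).1 =ᵐ[μ] s.1 :=
  ContinuousMap.coeFn_toLp (p := 2) (𝕜 := ℝ) μ s.1

lemma toSection_injective [μ.IsOpenPosMeasure] : Function.Injective (toSection μ) :=
  fun _ _ h => Subtype.ext (ContinuousMap.toLp_injective μ (congrArg Subtype.val h))

lemma inner_toSection (s s' : tangentFields) :
    ⟪toSection μ s, toSection μ s'⟫ = ∫ y, ⟪s.1 y, s'.1 y⟫ ∂μ := by
  rw [inner_Hsub]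
  refine integral_congr_ae ?_
  filter_upwards [coeFn_toSection μ s, coeFn_toSection μ s'] with y hs hs'
  rw [hs, hs']

lemma apply_toSection_eq_smul {K : S2 → S2 → V →ₗ[ℝ] V} {A : Hsub μ →L[ℝ] Hsub μ}
    (hA : ∀ f : Hsub μ, ∀ᵐ x ∂μ, (A f).1 x = ∫ y, K x y (f.1 y) ∂μ) {s : tangentFields} {c : ℝ}
    (hs : ∀ x, ∫ y, K x y (s.1 y) ∂μ = c • s.1 x) : A (toSection μ s) = c • toSection μ s := by
  refine Subtype.ext (Lp.ext ?_)
  filter_upwards [hA (toSection μ s), coeFn_toSection μ s, Lp.coeFn_smul c (toSection μ s).1]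
    with x hAx hsx hcx
  rw [hAx, Submodule.coe_smul, hcx, Pi.smul_apply, hsx, ← hs x]
  refine integral_congr_ae ?_
  filter_upwards [coeFn_toSection μ s] with y hy
  rw [hy]

lemma inner_toSection_quarterTurn (s s' : tangentFields) :
    ⟪toSection μ (quarterTurn s), toSection μ (quarterTurn s')⟫ =
      ⟪toSection μ s, toSection μ s'⟫ := by
  simp only [inner_toSection, quarterTurn_apply]
  refine integral_congr_ae (.of_forall fun y => ?_)
  simp only [inner_cross_cross, inner_sphere_self, mem_plane.mp (s'.2 y)]
  ring

variable [IsIsometryInvariant μ]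

lemma inner_toSection_curl_curl (p q : MvPolynomial (Fin 3) ℝ) :
    ⟪toSection μ (curl p), toSection μ (curl q)⟫ =
      -sphereIntegral μ (p * sphericalLaplacian q) := by
  rw [sphereIntegral_mul_sphericalLaplacian, neg_neg, inner_toSection]
  refine integral_congr_ae (.of_forall fun y => ?_)
  simp [PiLp.inner_apply, curl_apply, mul_comm]

lemma inner_toSection_curl_quarterTurn_curl (p q : MvPolynomial (Fin 3) ℝ) :
    ⟪toSection μ (curl p), toSection μ (quarterTurn (curl q))⟫ = 0 := by
  have hpoint (y : S2) : ⟪(curl p).1 y, (quarterTurn (curl q)).1 y⟫ =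
      -eval y.1.ofLp (∑ i, pderiv i q * angularDeriv i p) := by
    rw [quarterTurn_apply, curl_eq_cross_polyGradient q, cross_cross_eq_inner_smul_sub,
      inner_sub_right, inner_smul_right, real_inner_comm (y : V), mem_plane.mp ((curl p).2 y),
      mul_zero, zero_sub, inner_sphere_self]
    simp [PiLp.inner_apply, curl_apply, polyGradient]
  have hparts : sphereIntegral μ (∑ i, pderiv i q * angularDeriv i p) = 0 := by
    simp only [map_sum, sphereIntegral_mul_angularDeriv]
    rw [Finset.sum_neg_distrib, ← map_sum, ← Finset.sum_mul, sum_angularDeriv_pderiv, zero_mul,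
      map_zero, neg_zero]
  rw [inner_toSection]
  simp only [hpoint]
  exact (integral_neg _).trans (neg_eq_zero.mpr hparts)

lemma inner_toSection_curl_of_mem_harmonicSubmodule (p : MvPolynomial (Fin 3) ℝ) {n : ℕ}
    {q : MvPolynomial (Fin 3) ℝ} (hq : q ∈ harmonicSubmodule (Fin 3) ℝ n) :
    ⟪toSection μ (curl p), toSection μ (curl q)⟫ = n * (n + 1) * sphereIntegral μ (p * q) := by
  rw [inner_toSection_curl_curl, sphericalLaplacian_of_mem_harmonicSubmodule hq, mul_smul_comm,
    map_smul, smul_eq_mul]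
  ring

end Sections

section VectorHarmonics

open MvPolynomial

lemma curl_eq_zero_iff_of_mem_harmonicSubmodule {m : ℕ} {p : MvPolynomial (Fin 3) ℝ}
    (hp : p ∈ harmonicSubmodule (Fin 3) ℝ (m + 1)) : curl p = 0 ↔ p = 0 := by
  refine ⟨fun h => ?_, fun h => h ▸ map_zero curl⟩
  have hD (i : Fin 3) : angularDeriv i p = 0 :=
    eq_zero_of_forall_eval_sphere (isHomogeneous_angularDeriv hp.1 i) fun y => by
      rw [← curl_apply, h]
      rfl
  have hΛ := sphericalLaplacian_of_mem_harmonicSubmodule hp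
  simp only [sphericalLaplacian_apply, hD, map_zero, Finset.sum_const_zero] at hΛ
  exact (smul_eq_zero.mp hΛ.symm).resolve_left (neg_ne_zero.mpr (by positivity))

lemma quarterTurn_pow_injective (j : ℕ) : Function.Injective (quarterTurn ^ j) := by
  have h : Function.Injective quarterTurn := fun s s' hss => by
    have := congrArg quarterTurn hss
    rw [quarterTurn_quarterTurn, quarterTurn_quarterTurn] at this
    exact smul_right_injective _ (neg_ne_zero.mpr one_ne_zero) this
  rw [Module.End.coe_pow]
  exact h.iterate j

variable (μ : Measure S2) [IsFiniteMeasure μ]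

/-- The common eigenspaces of the parallel translation and orthographic operators. -/
def vectorHarmonics (k : ℕ × Fin 2) : Submodule ℝ (Hsub μ) :=
  (vectorHarmonicFields k.1 k.2).map (toSection μ)

instance instFiniteDimensionalVectorHarmonics (k : ℕ × Fin 2) :
    FiniteDimensional ℝ (vectorHarmonics μ k) := by
  unfold vectorHarmonics vectorHarmonicFields
  infer_instance

lemma finrank_vectorHarmonics [μ.IsOpenPosMeasure] (k : ℕ × Fin 2) :
    Module.finrank ℝ (vectorHarmonics μ k) = 2 * (k.1 + 1) + 1 := by
  have hcurl : Function.Injective (curl.domRestrict (harmonicSubmodule (Fin 3) ℝ (k.1 + 1))) :=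
    (injective_iff_map_eq_zero _).mpr fun p hp =>
      Subtype.ext ((curl_eq_zero_iff_of_mem_harmonicSubmodule p.2).mp hp)
  have hinj : Function.Injective
      (((toSection μ).comp ((quarterTurn ^ (k.2 : ℕ)).comp curl)).domRestrict
        (harmonicSubmodule (Fin 3) ℝ (k.1 + 1))) :=
    (toSection_injective μ).comp ((quarterTurn_pow_injective k.2).comp hcurl)
  rw [vectorHarmonics, vectorHarmonicFields, ← map_comp, ← LinearMap.range_domRestrict,
    LinearMap.finrank_range_of_inj hinj, finrank_harmonicSubmodule_fin_three]

variable [IsIsometryInvariant μ]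

lemma sphereIntegral_mul_eq_zero_of_mem_harmonicSubmodule {m n : ℕ} (hmn : m ≠ n)
    {p q : MvPolynomial (Fin 3) ℝ} (hp : p ∈ harmonicSubmodule (Fin 3) ℝ m)
    (hq : q ∈ harmonicSubmodule (Fin 3) ℝ n) : sphereIntegral μ (p * q) = 0 := by
  have h : ((m : ℝ) * (m + 1) - n * (n + 1)) * sphereIntegral μ (p * q) = 0 := by
    rw [sub_mul, ← inner_toSection_curl_of_mem_harmonicSubmodule μ p hq, mul_comm p,
      ← inner_toSection_curl_of_mem_harmonicSubmodule μ q hp, real_inner_comm, sub_self]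
  refine (mul_eq_zero.mp h).resolve_left ?_
  have : (m : ℝ) * (m + 1) - n * (n + 1) = (m - n) * (m + n + 1) := by ring
  rw [this]
  exact mul_ne_zero (sub_ne_zero.mpr (Nat.cast_injective.ne hmn)) (by positivity)

lemma inner_eq_zero_of_mem_vectorHarmonics {k l : ℕ × Fin 2} (hkl : k ≠ l) {f g : Hsub μ}
    (hf : f ∈ vectorHarmonics μ k) (hg : g ∈ vectorHarmonics μ l) : ⟪f, g⟫ = 0 := by
  obtain ⟨_, ⟨p, hp, rfl⟩, rfl⟩ := hf
  obtain ⟨_, ⟨q, hq, rfl⟩, rfl⟩ := hg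
  obtain ⟨m, i⟩ := k
  obtain ⟨n, j⟩ := l
  have hcurl (h : m ≠ n) : ⟪toSection μ (curl p), toSection μ (curl q)⟫ = 0 := by
    rw [inner_toSection_curl_of_mem_harmonicSubmodule μ p hq,
      sphereIntegral_mul_eq_zero_of_mem_harmonicSubmodule μ (by simpa using h) hp hq, mul_zero]
  fin_cases i <;> fin_cases j
  · exact hcurl fun h => hkl (h ▸ rfl)
  · exact inner_toSection_curl_quarterTurn_curl μ p q
  · exact (real_inner_comm _ _).trans (inner_toSection_curl_quarterTurn_curl μ q p)
  · exact (inner_toSection_quarterTurn μ _ _).trans (hcurl fun h => hkl (h ▸ rfl))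

lemma orthogonalFamily_vectorHarmonics :
    OrthogonalFamily ℝ (fun k => vectorHarmonics μ k) fun k => (vectorHarmonics μ k).subtypeₗᵢ :=
  fun _ _ hkl f g => inner_eq_zero_of_mem_vectorHarmonics μ hkl f.2 g.2

end VectorHarmonics

section Density

open MvPolynomial

/-- Restriction of polynomials to the sphere. -/
def polynomialOnSphere : MvPolynomial (Fin 3) ℝ →ₐ[ℝ] C(S2, ℝ) :=
  aeval fun i => ⟨fun y => y.1 i, by fun_prop⟩

lemma polynomialOnSphere_apply (p : MvPolynomial (Fin 3) ℝ) (y : S2) :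
    polynomialOnSphere p y = eval y.1.ofLp p := by
  induction p using MvPolynomial.induction_on with
  | C a => simp [polynomialOnSphere]
  | add p q hp hq => simp [hp, hq]
  | mul_X p i hp =>
    rw [map_mul, ContinuousMap.mul_apply, hp]
    simp [polynomialOnSphere]

lemma denseRange_polynomialOnSphere : DenseRange polynomialOnSphere := by
  suffices h : polynomialOnSphere.range.topologicalClosure = ⊤ by
    rw [DenseRange, ← AlgHom.coe_range, dense_iff_closure_eq, ← Subalgebra.topologicalClosure_coe,
      h, Algebra.coe_top]
  refine ContinuousMap.subalgebra_topologicalClosure_eq_top_of_separatesPoints _ fun x y hxy => ?_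
  obtain ⟨i, hi⟩ : ∃ i, x.1 i ≠ y.1 i := by
    by_contra! h
    exact hxy (Subtype.ext (PiLp.ext h))
  refine ⟨_, ⟨polynomialOnSphere (X i), ⟨X i, rfl⟩, rfl⟩, ?_⟩
  simpa [polynomialOnSphere_apply] using hi

/-- The vector field `y ↦ g(y) a` for a scalar function `g`. -/
def smulConst (a : V) : C(S2, ℝ) →L[ℝ] C(S2, V) :=
  ContinuousLinearMap.compLeftContinuous ℝ S2 (ContinuousLinearMap.toSpanSingleton ℝ a)

lemma sum_smulConst_basisFun (F : C(S2, V)) :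
    ∑ i, smulConst (EuclideanSpace.basisFun (Fin 3) ℝ i) ⟨fun y => F y i, by fun_prop⟩ = F := by
  ext1 y
  rw [ContinuousMap.sum_apply]
  exact (EuclideanSpace.basisFun (Fin 3) ℝ).sum_repr (F y)

variable {μ : Measure S2} [IsFiniteMeasure μ]

lemma inner_toSection_tangentialField (f : Hsub μ) (a : V) (q : MvPolynomial (Fin 3) ℝ) :
    ⟪f, toSection μ (tangentialField a q)⟫ =
      ⟪f.1, ContinuousMap.toLp 2 μ ℝ (smulConst a (polynomialOnSphere q))⟫ := by
  rw [inner_Hsub, L2.inner_def]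
  refine integral_congr_ae ?_
  filter_upwards [coeFn_toSection μ (tangentialField a q), f.2,
    ContinuousMap.coeFn_toLp (p := 2) (𝕜 := ℝ) μ (smulConst a (polynomialOnSphere q))]
    with y hs hf hL
  have hsmul : smulConst a (polynomialOnSphere q) y = eval y.1.ofLp q • a :=
    congrArg (· • a) (polynomialOnSphere_apply q y)
  rw [hs, hL, hsmul, tangentialField_apply, inner_smul_right, inner_smul_right, inner_sub_right,
    inner_smul_right, real_inner_comm (y : V) (f.1 y), mem_plane.mp hf, mul_zero, sub_zero]

lemma eq_zero_of_forall_inner_tangentialField {f : Hsub μ}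
    (h : ∀ a q, ⟪f, toSection μ (tangentialField a q)⟫ = 0) : f = 0 := by
  have hsmul (a : V) (g : C(S2, ℝ)) : ⟪f.1, ContinuousMap.toLp 2 μ ℝ (smulConst a g)⟫ = 0 := by
    refine denseRange_polynomialOnSphere.induction_on
      (p := fun g => ⟪f.1, ContinuousMap.toLp 2 μ ℝ (smulConst a g)⟫ = 0) g
      (isClosed_eq (by fun_prop) continuous_const) fun q => ?_
    rw [← inner_toSection_tangentialField, h]
  have hdense : DenseRange (ContinuousMap.toLp 2 μ ℝ : C(S2, V) →L[ℝ] Lp V 2 μ) :=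
    ContinuousMap.toLp_denseRange V μ ℝ (by norm_num)
  refine Subtype.ext (Dense.eq_zero_of_inner_left ℝ hdense ?_)
  rintro _ ⟨F, rfl⟩
  rw [← sum_smulConst_basisFun F, map_sum, inner_sum]
  exact Finset.sum_eq_zero fun i _ => hsmul _ _

lemma dense_iSup_vectorHarmonics :
    Dense ((⨆ k, vectorHarmonics μ k : Submodule ℝ (Hsub μ)) : Set (Hsub μ)) := by
  rw [dense_iff_topologicalClosure_eq_top, topologicalClosure_eq_top_iff, eq_bot_iff]
  refine fun f hf => eq_zero_of_forall_inner_tangentialField fun a q => ?_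
  have hmem : tangentialField a q ∈ (⨆ k, vectorHarmonics μ k).comap (toSection μ) :=
    tangentialField_mem (fun k => map_le_iff_le_comap.mp (le_iSup (vectorHarmonics μ) k)) a q
  exact (mem_orthogonal' _ _).mp hf _ hmem

end Density

section Spectrum

open Filter

lemma abs_transportEigenvalue (m : ℕ) : |transportEigenvalue m| = 1 / ((m + 1) * (m + 2)) := by
  rw [transportEigenvalue, abs_div, abs_neg_one_pow, abs_of_pos (by positivity)]

lemma transportEigenvalue_ne_zero (m : ℕ) : transportEigenvalue m ≠ 0 := by
  rw [← abs_pos, abs_transportEigenvalue]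
  positivity

lemma strictAnti_abs_transportEigenvalue : StrictAnti fun m => |transportEigenvalue m| := by
  refine strictAnti_nat_of_succ_lt fun m => ?_
  rw [abs_transportEigenvalue, abs_transportEigenvalue]
  push_cast
  exact one_div_lt_one_div_of_lt (by positivity) (by nlinarith)

lemma transportEigenvalue_inj {m n : ℕ} :
    transportEigenvalue m = transportEigenvalue n ↔ m = n :=
  ⟨fun h => strictAnti_abs_transportEigenvalue.injective (congrArg abs h), fun h => h ▸ rfl⟩

lemma transportEigenvalue_sub_one {n : ℕ} (hn : 1 ≤ n) :
    transportEigenvalue (n - 1) = (-1) ^ (n - 1) / (n * (n + 1)) := by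
  obtain ⟨m, rfl⟩ := Nat.exists_eq_add_of_le' hn
  rw [Nat.add_sub_cancel, transportEigenvalue]
  push_cast
  ring_nf

lemma neg_transportEigenvalue_sub_one {n : ℕ} (hn : 1 ≤ n) :
    -transportEigenvalue (n - 1) = (-1) ^ n / (n * (n + 1)) := by
  rw [transportEigenvalue_sub_one hn, ← neg_div, ← neg_one_mul, mul_pow_sub_one (by lia)]

lemma exists_nat_iff_exists_sub_one {p : ℕ → Prop} : (∃ m, p m) ↔ ∃ n, 1 ≤ n ∧ p (n - 1) :=
  ⟨fun ⟨m, hm⟩ => ⟨m + 1, by lia, hm⟩, fun ⟨n, _, hn⟩ => ⟨n - 1, hn⟩⟩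

lemma tendsto_transportEigenvalue : Tendsto transportEigenvalue atTop (nhds 0) := by
  refine squeeze_zero_norm (fun m => ?_) tendsto_one_div_add_atTop_nhds_zero_nat
  rw [Real.norm_eq_abs, abs_transportEigenvalue]
  exact one_div_le_one_div_of_le (by positivity) (by nlinarith)

lemma tendsto_transportEigenvalue_fst {ι : Type*} [Finite ι] :
    Tendsto (fun k : ℕ × ι => transportEigenvalue k.1) cofinite (nhds 0) := by
  have hfst : Tendsto (Prod.fst : ℕ × ι → ℕ) cofinite cofinite :=
    .cofinite_of_finite_preimage_singleton fun m => by
      rw [← Set.prod_univ]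
      exact (Set.finite_singleton m).prod Set.finite_univ
  exact tendsto_transportEigenvalue.comp (Nat.cofinite_eq_atTop ▸ hfst)

lemma even_add_fin_two_iff {m : ℕ} {j : Fin 2} : Even (m + j) ↔ j = Fin.ofNat 2 m := by
  rw [Nat.even_add, Fin.ext_iff, Fin.val_ofNat, Nat.even_iff, Nat.even_iff]
  lia

variable {μ : Measure S2} [IsProbabilityMeasure μ] [IsIsometryInvariant μ]
  {A : Hsub μ →L[ℝ] Hsub μ}

lemma vectorHarmonics_ne_bot (k : ℕ × Fin 2) : vectorHarmonics μ k ≠ ⊥ := fun h => by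
  have hdim := finrank_vectorHarmonics μ k
  rw [h, finrank_bot] at hdim
  lia

theorem diagonalizedBy_of_Tker
    (hA : ∀ f : Hsub μ, ∀ᵐ x ∂μ, (A f).1 x = ∫ y, Tker x y (f.1 y) ∂μ) :
    DiagonalizedBy A (vectorHarmonics μ) fun k => transportEigenvalue k.1 where
  orthogonalFamily := orthogonalFamily_vectorHarmonics μ
  dense := dense_iSup_vectorHarmonics
  apply_of_mem := by
    rintro k _ ⟨s, hs, rfl⟩
    refine apply_toSection_eq_smul μ hA fun x => ?_
    rw [integral_Tker, integral_transport_of_mem_vectorHarmonicFields μ hs]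

theorem isCompactOperator_of_Tker
    (hA : ∀ f : Hsub μ, ∀ᵐ x ∂μ, (A f).1 x = ∫ y, Tker x y (f.1 y) ∂μ) : IsCompactOperator A :=
  (diagonalizedBy_of_Tker hA).isCompactOperator tendsto_transportEigenvalue_fst

theorem ker_eq_bot_of_Tker
    (hA : ∀ f : Hsub μ, ∀ᵐ x ∂μ, (A f).1 x = ∫ y, Tker x y (f.1 y) ∂μ) :
    LinearMap.ker (A : Hsub μ →ₗ[ℝ] Hsub μ) = ⊥ := by
  rw [← Module.End.eigenspace_zero, ← not_ne_iff]
  rintro h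
  obtain ⟨k, hk, -⟩ := (diagonalizedBy_of_Tker hA).hasEigenvalue_iff.mp h
  exact transportEigenvalue_ne_zero k.1 hk

theorem hasEigenvalue_iff_of_Tker
    (hA : ∀ f : Hsub μ, ∀ᵐ x ∂μ, (A f).1 x = ∫ y, Tker x y (f.1 y) ∂μ) {lam : ℝ} :
    Module.End.HasEigenvalue (A : Hsub μ →ₗ[ℝ] Hsub μ) lam ↔
      ∃ m, transportEigenvalue m = lam := by
  simp [(diagonalizedBy_of_Tker hA).hasEigenvalue_iff, vectorHarmonics_ne_bot]

theorem finrank_eigenspace_of_Tker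
    (hA : ∀ f : Hsub μ, ∀ᵐ x ∂μ, (A f).1 x = ∫ y, Tker x y (f.1 y) ∂μ) (m : ℕ) :
    Module.finrank ℝ
      (Module.End.eigenspace (A : Hsub μ →ₗ[ℝ] Hsub μ) (transportEigenvalue m)) =
        2 * (2 * (m + 1) + 1) := by
  rw [(diagonalizedBy_of_Tker hA).finrank_eigenspace (s := {m} ×ˢ Finset.univ)
    (by simp [transportEigenvalue_inj, eq_comm])]
  simp [finrank_vectorHarmonics]

theorem diagonalizedBy_of_Oker
    (hA : ∀ f : Hsub μ, ∀ᵐ x ∂μ, (A f).1 x = ∫ y, Oker x y (f.1 y) ∂μ) :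
    DiagonalizedBy A (vectorHarmonics μ)
      fun k => if Even (k.1 + k.2) then -transportEigenvalue k.1 else 0 where
  orthogonalFamily := orthogonalFamily_vectorHarmonics μ
  dense := dense_iSup_vectorHarmonics
  apply_of_mem := by
    rintro k _ ⟨s, hs, rfl⟩
    exact apply_toSection_eq_smul μ hA (integral_Oker_of_mem_vectorHarmonicFields μ hs)

theorem isCompactOperator_of_Oker
    (hA : ∀ f : Hsub μ, ∀ᵐ x ∂μ, (A f).1 x = ∫ y, Oker x y (f.1 y) ∂μ) : IsCompactOperator A :=
  (diagonalizedBy_of_Oker hA).isCompactOperator <|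
    .if' (by simpa using tendsto_transportEigenvalue_fst.neg) tendsto_const_nhds

theorem hasEigenvalue_iff_of_Oker
    (hA : ∀ f : Hsub μ, ∀ᵐ x ∂μ, (A f).1 x = ∫ y, Oker x y (f.1 y) ∂μ) {lam : ℝ}
    (hlam : lam ≠ 0) :
    Module.End.HasEigenvalue (A : Hsub μ →ₗ[ℝ] Hsub μ) lam ↔
      ∃ m, -transportEigenvalue m = lam := by
  simp [(diagonalizedBy_of_Oker hA).hasEigenvalue_iff, vectorHarmonics_ne_bot,
    even_add_fin_two_iff, ite_eq_iff, hlam.symm]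

theorem finrank_eigenspace_of_Oker
    (hA : ∀ f : Hsub μ, ∀ᵐ x ∂μ, (A f).1 x = ∫ y, Oker x y (f.1 y) ∂μ) (m : ℕ) :
    Module.finrank ℝ
      (Module.End.eigenspace (A : Hsub μ →ₗ[ℝ] Hsub μ) (-transportEigenvalue m)) =
        2 * (m + 1) + 1 := by
  have hs (k : ℕ × Fin 2) : k ∈ ({(m, Fin.ofNat 2 m)} : Finset (ℕ × Fin 2)) ↔
      (if Even (k.1 + k.2) then -transportEigenvalue k.1 else 0) = -transportEigenvalue m := by
    obtain ⟨n, j⟩ := k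
    simp only [Finset.mem_singleton, Prod.mk.injEq, even_add_fin_two_iff]
    split_ifs with hj
    · rw [neg_inj, transportEigenvalue_inj]
      exact and_iff_left_of_imp fun h => h ▸ hj
    · refine iff_of_false (fun h => hj (h.1 ▸ h.2)) ?_
      rw [eq_comm, neg_eq_zero]
      exact transportEigenvalue_ne_zero m
  rw [(diagonalizedBy_of_Oker hA).finrank_eigenspace hs, Finset.sum_singleton,
    finrank_vectorHarmonics]

end Spectrum

/-- The parallel translation operator `T = C - O` is a compact self-adjoint
operator with trivial kernel whose eigenvalues are exactly `λ_n = (-1)^(n-1)/(n(n+1))`,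
`n ≥ 1`, the eigenspace for `λ_n` having dimension `2(2n+1)`; the orthographic operator `O`
is a compact self-adjoint operator whose nonzero eigenvalues are exactly
`-λ_n = (-1)^n/(n(n+1))`, `n ≥ 1`, the eigenspace for `-λ_n` having dimension `2n+1`. -/
theorem parallel_translation_and_orthographic_spectrum
    (μ : Measure S2) [IsProbabilityMeasure μ]
    (hμ : ∀ g : V ≃ₗᵢ[ℝ] V, MeasurePreserving (sphereMap g) μ μ)
    (Top Oop : Hsub μ →L[ℝ] Hsub μ)
    (hT : ∀ s : Hsub μ, ∀ᵐ x ∂μ,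
      ((Top s : Lp V 2 μ) : S2 → V) x = ∫ y, Tker x y (((s : Lp V 2 μ) : S2 → V) y) ∂μ)
    (hO : ∀ s : Hsub μ, ∀ᵐ x ∂μ,
      ((Oop s : Lp V 2 μ) : S2 → V) x = ∫ y, Oker x y (((s : Lp V 2 μ) : S2 → V) y) ∂μ) :
    -- `T` is compact and self-adjoint, with trivial kernel
    IsCompactOperator Top ∧
    (∀ f g : Hsub μ, ⟪Top f, g⟫ = ⟪f, Top g⟫) ∧
    LinearMap.ker (Top : Hsub μ →ₗ[ℝ] Hsub μ) = ⊥ ∧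
    -- the eigenvalues of `T` are exactly the `λ_n`
    (∀ lam : ℝ,
      Module.End.HasEigenvalue (Top : Hsub μ →ₗ[ℝ] Hsub μ) lam ↔
        ∃ n : ℕ, 1 ≤ n ∧ lam = (-1 : ℝ) ^ (n - 1) / (n * (n + 1))) ∧
    (∀ n : ℕ, 1 ≤ n →
      Module.finrank ℝ
        (Module.End.eigenspace (Top : Hsub μ →ₗ[ℝ] Hsub μ)
          ((-1 : ℝ) ^ (n - 1) / (n * (n + 1)))) = 2 * (2 * n + 1)) ∧
    -- `O` is compact and self-adjoint
    IsCompactOperator Oop ∧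
    (∀ f g : Hsub μ, ⟪Oop f, g⟫ = ⟪f, Oop g⟫) ∧
    -- the nonzero eigenvalues of `O` are exactly the `-λ_n`
    (∀ lam : ℝ, lam ≠ 0 →
      (Module.End.HasEigenvalue (Oop : Hsub μ →ₗ[ℝ] Hsub μ) lam ↔
        ∃ n : ℕ, 1 ≤ n ∧ lam = (-1 : ℝ) ^ n / (n * (n + 1)))) ∧
    (∀ n : ℕ, 1 ≤ n →
      Module.finrank ℝ
        (Module.End.eigenspace (Oop : Hsub μ →ₗ[ℝ] Hsub μ)
          ((-1 : ℝ) ^ n / (n * (n + 1)))) = 2 * n + 1) := by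
  have : IsIsometryInvariant μ := ⟨hμ⟩
  refine ⟨isCompactOperator_of_Tker hT, (diagonalizedBy_of_Tker hT).isSymmetric fun _ => rfl,
    ker_eq_bot_of_Tker hT, fun lam => ?_, fun n hn => ?_, isCompactOperator_of_Oker hO,
    (diagonalizedBy_of_Oker hO).isSymmetric fun _ => rfl, fun lam hlam => ?_, fun n hn => ?_⟩
  · rw [hasEigenvalue_iff_of_Tker hT, exists_nat_iff_exists_sub_one]
    refine exists_congr fun n => and_congr_right fun hn => ?_
    rw [transportEigenvalue_sub_one hn, eq_comm]
  · rw [← transportEigenvalue_sub_one hn, finrank_eigenspace_of_Tker hT]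
    lia
  · rw [hasEigenvalue_iff_of_Oker hO hlam, exists_nat_iff_exists_sub_one]
    refine exists_congr fun n => and_congr_right fun hn => ?_
    rw [neg_transportEigenvalue_sub_one hn, eq_comm]
  · rw [← neg_transportEigenvalue_sub_one hn, finrank_eigenspace_of_Oker hO]
    lia
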